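/- arXiv:1605.05248 — 19 statements merged into one kernel-verified Lean document; each statement's English description precedes it below -/
import Mathlib

section
/- Let f : S → ℂ be a non-zero solution of the integral Van Vleck equation. Then f(τ(x)) = −f(x) for all x ∈ S. -/
theorem stmt_0 {S ι : Type*} [Semigroup S] (τ : S → S)
    (hτmul : ∀ x y : S, τ (x * y) = τ y * τ x)
    (hτinv : ∀ x : S, τ (τ x) = x)
    (I : Finset ι) (c : ι → ℂ) (z : ι → S)
    (hz : ∀ i ∈ I, ∀ s : S, z i * s = s * z i)
    (f : S → ℂ) (hf : f ≠ 0)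
(hVV : ∀ x y : S,
      (∑ i ∈ I, c i * f (x * τ y * z i)) - (∑ i ∈ I, c i * f (x * y * z i))
        = 2 * f x * f y) :
    ∀ x : S, f (τ x) = -f x := by 
  intro y
  obtain ⟨x, hx⟩ := Function.ne_iff.mp hf
  have h1 := hVV x y
  have h2 := hVV x (τ y)
  rw [hτinv] at h2
  have hx' : f x ≠ 0 := hx
  apply mul_left_cancel₀ hx'
  linear_combination (h1 + h2) * (-1 / 2)
end

section
/- Let f : S → ℂ be a non-zero solution of the integral Van Vleck equation. Then ∫_S f(t)dμ(t) = Σ_{i∈I} c_i f(z_i) ≠ 0. -/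
/-- averaging operator -/
noncomputable def avg {S ι : Type*} [Semigroup S] (I : Finset ι) (c : ι → ℂ) (z : ι → S)
    (h : S → ℂ) : S → ℂ := fun x => ∑ i ∈ I, c i * h (x * z i)

theorem avg_comm {S ι : Type*} [Semigroup S] (I : Finset ι) (c : ι → ℂ) (z w : ι → S)
    (hz : ∀ i ∈ I, ∀ s : S, z i * s = s * z i) (h : S → ℂ) :
    avg I c z (avg I c w h) = avg I c w (avg I c z h) := by
  funext x
  simp only [avg, Finset.mul_sum]
  rw [Finset.sum_comm]
  refine Finset.sum_congr rfl fun i _ => Finset.sum_congr rfl fun j hj => ?_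
  rw [mul_assoc x, hz j hj, ← mul_assoc x]
  ring

theorem avg_neg {S ι : Type*} [Semigroup S] (I : Finset ι) (c : ι → ℂ) (z : ι → S)
    (h : S → ℂ) : avg I c z (-h) = - avg I c z h := by
  funext x
  simp [avg]

theorem avg_step {S ι : Type*} [Semigroup S] (I : Finset ι) (c : ι → ℂ) (z : ι → S)
    (hz : ∀ i ∈ I, ∀ s : S, z i * s = s * z i) (τ : S → S) (f g k : S → ℂ)
    (H : ∀ x y, g (x * τ y) - g (x * y) = 2 * k x * f y) (x y : S) :
    avg I c z g (x * τ y) - avg I c z g (x * y) = 2 * avg I c z k x * f y := by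
  simp only [avg]
  rw [← Finset.sum_sub_distrib, Finset.mul_sum, Finset.sum_mul]
  refine Finset.sum_congr rfl fun i hi => ?_
  have := H (x * z i) y
  rw [mul_assoc x (τ y), mul_assoc x y, ← hz i hi, ← hz i hi, ← mul_assoc, ← mul_assoc]
  linear_combination c i * this

theorem avg_tau {S ι : Type*} [Semigroup S] (I : Finset ι) (c : ι → ℂ) (z : ι → S)
    (hz : ∀ i ∈ I, ∀ s : S, z i * s = s * z i) (τ : S → S)
    (hτmul : ∀ x y : S, τ (x * y) = τ y * τ x)
    (hτinv : ∀ x : S, τ (τ x) = x) (g h : S → ℂ)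
    (H : ∀ y, g (τ y) = - h y) (y : S) :
    avg I c z g (τ y) = - avg I c (fun i => τ (z i)) h y := by
  simp only [avg]
  rw [← Finset.sum_neg_distrib]
  refine Finset.sum_congr rfl fun i hi => ?_
  have := H (y * τ (z i))
  rw [hτmul, hτinv, hz i hi] at this
  rw [this]
  ring


theorem stmt_1 {S ι : Type*} [Semigroup S] (τ : S → S)
    (hτmul : ∀ x y : S, τ (x * y) = τ y * τ x)
    (hτinv : ∀ x : S, τ (τ x) = x)
    (I : Finset ι) (c : ι → ℂ) (z : ι → S)
    (hz : ∀ i ∈ I, ∀ s : S, z i * s = s * z i)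
    (f : S → ℂ) (hf : f ≠ 0)
(hVV : ∀ x y : S,
      (∑ i ∈ I, c i * f (x * τ y * z i)) - (∑ i ∈ I, c i * f (x * y * z i))
        = 2 * f x * f y) :
    (∑ i ∈ I, c i * f (z i)) ≠ 0 := by
  intro m
  have hτz : ∀ i ∈ I, ∀ s : S, τ (z i) * s = s * τ (z i) := by
    intro i hi s
    have := congrArg τ (hz i hi (τ s))
    rw [hτmul, hτmul, hτinv] at this
    exact this.symm
  obtain ⟨a, ha⟩ : ∃ a, f a ≠ 0 := by
    by_contra hcon
    push Not at hcon
    exact hf (funext hcon)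
  have V1 : ∀ x y, avg I c z f (x * τ y) - avg I c z f (x * y) = 2 * f x * f y := hVV
  have V2 := avg_step I c z hz τ f _ _ V1
  have V3 := avg_step I c z hz τ f _ _ V2
  have hodd : ∀ y, f (τ y) = - f y := by
    intro y
    have h1 := V1 a y
    have h2 := V1 a (τ y)
    rw [hτinv] at h2
    have : f a * (f (τ y) + f y) = 0 := by linear_combination -(h1 + h2) / 2
    rcases mul_eq_zero.mp this with h | h
    · exact absurd h ha
    · linear_combination h
  have T2 := avg_tau I c z hz τ hτmul hτinv _ _
    (avg_tau I c z hz τ hτmul hτinv _ _ hodd)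
  have E1 : ∀ y, avg I c z (avg I c z f) (τ y) = avg I c z (avg I c z f) y := by
    intro y
    rw [← sub_eq_zero]
    have : (∑ i ∈ I, c i * (avg I c z f (z i * τ y) - avg I c z f (z i * y))) = 0 := by
      have h2 : 2 * f y * (∑ i ∈ I, c i * f (z i)) = 0 := by rw [m, mul_zero]
      rw [← h2, Finset.mul_sum]
      refine Finset.sum_congr rfl fun i hi => ?_
      rw [V1]
      ring
    rw [← this]
    conv_lhs => unfold avg
    rw [← Finset.sum_sub_distrib]
    refine Finset.sum_congr rfl fun i hi => ?_
    rw [hz i hi, hz i hi, mul_sub]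
    rfl
  have E2 : avg I c (fun i => τ (z i)) (avg I c z f) = avg I c z (avg I c z f) := by
    funext x
    rw [← sub_eq_zero]
    have : (∑ i ∈ I, c i * (avg I c z f (x * τ (z i)) - avg I c z f (x * z i))) = 0 := by
      have h2 : 2 * f x * (∑ i ∈ I, c i * f (z i)) = 0 := by rw [m, mul_zero]
      rw [← h2, Finset.mul_sum]
      refine Finset.sum_congr rfl fun i hi => ?_
      rw [V1]
      ring
    rw [← this]
    conv_lhs => unfold avg
    rw [← Finset.sum_sub_distrib]
    refine Finset.sum_congr rfl fun i hi => ?_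
    rw [mul_sub]
    rfl
  have E3 : avg I c (fun i => τ (z i)) (avg I c (fun i => τ (z i)) f)
      = - avg I c z (avg I c z f) := by
    funext y
    have h1 := T2 y
    rw [E1] at h1
    simp only [Pi.neg_apply]
    linear_combination h1
  have C := avg_comm I c z (fun i => τ (z i)) hz
  have E4 := congrArg (avg I c z) E3
  rw [avg_neg, C, C, E2, ← C, E2] at E4
  have Z3 : ∀ x, avg I c z (avg I c z (avg I c z f)) x = 0 := by
    intro x
    have := congrFun E4 x
    simp only [Pi.neg_apply] at this
    linear_combination this / 2
  have Z2 : ∀ x, avg I c z (avg I c z f) x = 0 := by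
    intro x
    have := V3 x a
    rw [Z3, Z3] at this
    simpa [ha] using this
  have Z1 : ∀ x, avg I c z f x = 0 := by
    intro x
    have := V2 x a
    rw [Z2, Z2] at this
    simpa [ha] using this
  have := V1 a a
  rw [Z1, Z1] at this
  simp [ha] at this
end

section
/- Let f : S → ℂ be a non-zero solution of the integral Van Vleck equation. Then Σ_{i∈I} Σ_{j∈I} c_i c_j f(z_i z_j) = 0 and Σ_{i∈I} Σ_{j∈I} c_i c_j f(τ(z_i) z_j) = 0. -/
theorem stmt_2 {S ι : Type*} [Semigroup S] (τ : S → S)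
    (hτmul : ∀ x y : S, τ (x * y) = τ y * τ x)
    (hτinv : ∀ x : S, τ (τ x) = x)
    (I : Finset ι) (c : ι → ℂ) (z : ι → S)
    (hz : ∀ i ∈ I, ∀ s : S, z i * s = s * z i)
    (f : S → ℂ) (hf : f ≠ 0)
(hVV : ∀ x y : S,
      (∑ i ∈ I, c i * f (x * τ y * z i)) - (∑ i ∈ I, c i * f (x * y * z i))
        = 2 * f x * f y) :
    (∑ i ∈ I, ∑ j ∈ I, c i * c j * f (z i * z j)) = 0 ∧
    (∑ i ∈ I, ∑ j ∈ I, c i * c j * f (τ (z i) * z j)) = 0 := by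
  -- images of the central elements are central
  have hw : ∀ i ∈ I, ∀ s : S, τ (z i) * s = s * τ (z i) := by
    intro i hi s
    have h := congrArg τ (hz i hi (τ s))
    rw [hτmul, hτmul, hτinv] at h
    exact h.symm
  obtain ⟨a, ha⟩ : ∃ a, f a ≠ 0 := by
    by_contra! h
    exact hf (funext h)
  have hodd : ∀ y, f (τ y) = - f y := by
    intro y
    have h1 := hVV a y
    have h2 := hVV a (τ y)
    rw [hτinv] at h2
    have h3 : 2 * f a * (f (τ y) + f y) = 0 := by linear_combination -h1 - h2
    have h4 : f (τ y) + f y = 0 := by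
      rcases mul_eq_zero.mp h3 with h | h
      · exact absurd h (by simpa using ha)
      · exact h
    linear_combination h4
  have hB : (∑ i ∈ I, ∑ j ∈ I, c i * c j * f (τ (z i) * z j)) = 0 := by
    have h : (∑ i ∈ I, ∑ j ∈ I, c i * c j * f (τ (z i) * z j))
        = - (∑ i ∈ I, ∑ j ∈ I, c i * c j * f (τ (z i) * z j)) := by
      conv_lhs => rw [Finset.sum_comm]
      rw [← Finset.sum_neg_distrib]
      refine Finset.sum_congr rfl fun i _ => ?_
      rw [← Finset.sum_neg_distrib]
      refine Finset.sum_congr rfl fun j _ => ?_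
      have := hodd (τ (z i) * z j)
      rw [hτmul, hτinv] at this
      rw [this]; ring
    linear_combination h / 2
  refine ⟨?_, hB⟩
  obtain ⟨T, hT⟩ : ∃ T : (S → ℂ) → S → ℂ, ∀ g x, T g x = ∑ i ∈ I, c i * g (x * z i) :=
    ⟨_, fun _ _ => rfl⟩
  obtain ⟨U, hU⟩ : ∃ U : (S → ℂ) → S → ℂ, ∀ g x, U g x = ∑ i ∈ I, c i * g (x * τ (z i)) :=
    ⟨_, fun _ _ => rfl⟩
  have hV : ∀ x y, T f (x * τ y) - T f (x * y) = 2 * f x * f y := by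
    intro x y
    rw [hT, hT]; exact hVV x y
  have hTU : ∀ g, T (U g) = U (T g) := by
    intro g; funext x
    simp only [hT, hU, Finset.mul_sum]
    rw [Finset.sum_comm]
    refine Finset.sum_congr rfl fun i hi => Finset.sum_congr rfl fun j hj => ?_
    rw [mul_assoc x, mul_assoc x, hz j hj]; ring
  have hTl : ∀ (r : ℂ) g, T (fun x => r * g x) = fun x => r * T g x := by
    intro r g; funext x
    simp only [hT, Finset.mul_sum]
    exact Finset.sum_congr rfl fun i _ => by ring
  have hUl : ∀ (r : ℂ) g, U (fun x => r * g x) = fun x => r * U g x := by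
    intro r g; funext x
    simp only [hU, Finset.mul_sum]
    exact Finset.sum_congr rfl fun i _ => by ring
  -- basic shifted sums
  have hTx : ∀ g x y, ∑ i ∈ I, c i * g (x * z i * y) = T g (x * y) := by
    intro g x y; rw [hT]
    refine Finset.sum_congr rfl fun i hi => ?_
    rw [mul_assoc x, hz i hi, mul_assoc x]
  have hUx : ∀ g x y, ∑ i ∈ I, c i * g (x * τ (z i) * y) = U g (x * y) := by
    intro g x y; rw [hU]
    refine Finset.sum_congr rfl fun i hi => ?_
    rw [mul_assoc x, hw i hi, mul_assoc x]
  have hTy : ∀ g x y, ∑ i ∈ I, c i * g (x * (y * z i)) = T g (x * y) := by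
    intro g x y; rw [hT]
    simp only [mul_assoc]
  have hUy : ∀ g x y, ∑ i ∈ I, c i * g (x * (y * τ (z i))) = U g (x * y) := by
    intro g x y; rw [hU]
    simp only [mul_assoc]
  have hTt : ∀ g x y, ∑ i ∈ I, c i * g (x * τ (y * z i)) = U g (x * τ y) := by
    intro g x y; rw [hU]
    refine Finset.sum_congr rfl fun i hi => ?_
    rw [hτmul, hw i hi, mul_assoc]
  have hUt : ∀ g x y, ∑ i ∈ I, c i * g (x * τ (y * τ (z i))) = T g (x * τ y) := by
    intro g x y; rw [hT]
    refine Finset.sum_congr rfl fun i hi => ?_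
    rw [hτmul, hτinv, hz i hi, mul_assoc]
  -- transfer of a relation under T, U in either variable
  have tx : ∀ g h p q : S → ℂ, (∀ x y, g (x * τ y) - h (x * y) = 2 * p x * q y) →
      ∀ x y, T g (x * τ y) - T h (x * y) = 2 * T p x * q y := by
    intro g h p q H x y
    rw [← hTx, ← hTx, hT p, ← Finset.sum_sub_distrib, Finset.mul_sum, Finset.sum_mul]
    exact Finset.sum_congr rfl fun i _ => by linear_combination c i * H (x * z i) y
  have ux : ∀ g h p q : S → ℂ, (∀ x y, g (x * τ y) - h (x * y) = 2 * p x * q y) →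
      ∀ x y, U g (x * τ y) - U h (x * y) = 2 * U p x * q y := by
    intro g h p q H x y
    rw [← hUx, ← hUx, hU p, ← Finset.sum_sub_distrib, Finset.mul_sum, Finset.sum_mul]
    exact Finset.sum_congr rfl fun i _ => by linear_combination c i * H (x * τ (z i)) y
  have ty : ∀ g h p q : S → ℂ, (∀ x y, g (x * τ y) - h (x * y) = 2 * p x * q y) →
      ∀ x y, U g (x * τ y) - T h (x * y) = 2 * p x * T q y := by
    intro g h p q H x y
    rw [← hTt, ← hTy, hT q, ← Finset.sum_sub_distrib, Finset.mul_sum]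
    exact Finset.sum_congr rfl fun i _ => by linear_combination c i * H x (y * z i)
  have uy : ∀ g h p q : S → ℂ, (∀ x y, g (x * τ y) - h (x * y) = 2 * p x * q y) →
      ∀ x y, T g (x * τ y) - U h (x * y) = 2 * p x * U q y := by
    intro g h p q H x y
    rw [← hUt, ← hUy, hU q, ← Finset.sum_sub_distrib, Finset.mul_sum]
    exact Finset.sum_congr rfl fun i _ => by linear_combination c i * H x (y * τ (z i))
  -- K f = l f
  have hsym : ∀ x y, U (T f) x * f y = f x * U (T f) y := by
    intro x y
    have h1 := ux _ _ _ _ (tx _ _ _ _ hV) x y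
    have h2 := uy _ _ _ _ (ty _ _ _ _ hV) x y
    simp only [hTU] at h1 h2
    linear_combination (h2 - h1) / 2
  obtain ⟨l, hl⟩ : ∃ l : ℂ, U (T f) = fun x => l * f x := by
    refine ⟨U (T f) a / f a, funext fun x => ?_⟩
    have := hsym x a
    field_simp
    linear_combination this
  obtain ⟨m, hm⟩ : ∃ m : ℂ, T (T f) = fun x => m * f x := by
    refine ⟨l - 2 * ∑ i ∈ I, c i * f (z i), funext fun x => ?_⟩
    have h1 : U (T f) x - T (T f) x = 2 * f x * ∑ i ∈ I, c i * f (z i) := by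
      rw [hU, hT (T f), ← Finset.sum_sub_distrib, Finset.mul_sum]
      exact Finset.sum_congr rfl fun i _ => by linear_combination c i * hV x (z i)
    rw [hl] at h1
    linear_combination -h1
  -- l * A = 0
  have hlA : l * (∑ i ∈ I, ∑ j ∈ I, c i * c j * f (z i * z j)) = 0 := by
    have e1 : l * (∑ i ∈ I, ∑ j ∈ I, c i * c j * f (z i * z j))
        = ∑ i ∈ I, c i * T (U (T f)) (z i) := by
      rw [hl, hTl, Finset.mul_sum]
      refine Finset.sum_congr rfl fun i _ => ?_
      simp only [hT, Finset.mul_sum]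
      exact Finset.sum_congr rfl fun j _ => by ring
    have e2 : ∑ i ∈ I, c i * T (U (T f)) (z i)
        = m * ∑ i ∈ I, ∑ j ∈ I, c i * c j * f (τ (z i) * z j) := by
      rw [hTU, hm, hUl, Finset.sum_comm, Finset.mul_sum]
      refine Finset.sum_congr rfl fun i hi => ?_
      simp only [hU, Finset.mul_sum]
      refine Finset.sum_congr rfl fun j hj => ?_
      rw [hz i hi]; ring
    rw [e1, e2, hB, mul_zero]
  rcases mul_eq_zero.mp hlA with h0 | h0
  swap
  · exact h0
  exfalso
  subst h0
  have hm0 : m = 0 := by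
    by_contra hmn
    have h1 : ∀ x y, T f (x * y) = -2 * f x * f y := by
      intro x y
      have h := ty _ _ _ _ (ty _ _ _ _ hV) x y
      rw [hl, hUl, hm, hTl] at h
      apply mul_left_cancel₀ hmn
      linear_combination -h
    have h2 : ∀ x y, T f (x * τ y) = 0 := by
      intro x y
      linear_combination hV x y + h1 x y
    have h3 := h2 a (τ a)
    rw [hτinv, h1] at h3
    simp [ha] at h3
  subst hm0
  have hT0 : ∀ x, T f x = 0 := by
    intro x
    have h := tx _ _ _ _ hV x a
    rw [hm] at h
    simpa [ha] using h
  have h := hV a a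
  rw [hT0, hT0] at h
  simp [ha] at h
end

section
/- Let f : S → ℂ be a non-zero solution of the integral Van Vleck equation. Then for all x ∈ S, Σ_{i∈I} Σ_{j∈I} c_i c_j f(x τ(z_i) z_j) = f(x) · Σ_{i∈I} c_i f(z_i). -/
theorem stmt_3 {S ι : Type*} [Semigroup S] (τ : S → S)
    (hτmul : ∀ x y : S, τ (x * y) = τ y * τ x)
    (hτinv : ∀ x : S, τ (τ x) = x)
    (I : Finset ι) (c : ι → ℂ) (z : ι → S)
    (hz : ∀ i ∈ I, ∀ s : S, z i * s = s * z i)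
    (f : S → ℂ) (hf : f ≠ 0)
(hVV : ∀ x y : S,
      (∑ i ∈ I, c i * f (x * τ y * z i)) - (∑ i ∈ I, c i * f (x * y * z i))
        = 2 * f x * f y) :
    ∀ x : S, (∑ i ∈ I, ∑ j ∈ I, c i * c j * f (x * τ (z i) * z j))
      = f x * ∑ i ∈ I, c i * f (z i) := by
  have hw : ∀ i ∈ I, ∀ s : S, τ (z i) * s = s * τ (z i) := by
    intro i hi s
    have := congrArg τ (hz i hi (τ s))
    rw [hτmul, hτmul, hτinv] at this
    exact this.symm
  obtain ⟨M, hM⟩ : ∃ M : S → ℂ, ∀ x, M x = ∑ i ∈ I, c i * f (x * z i) := ⟨_, fun _ => rfl⟩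
  obtain ⟨N, hN⟩ : ∃ N : S → ℂ, ∀ x, N x = ∑ i ∈ I, c i * f (x * τ (z i)) := ⟨_, fun _ => rfl⟩
  obtain ⟨g, hg⟩ : ∃ g : S → ℂ, ∀ x, g x = ∑ i ∈ I, c i * M (x * τ (z i)) := ⟨_, fun _ => rfl⟩
  obtain ⟨h, hh⟩ : ∃ h : S → ℂ, ∀ x, h x = ∑ i ∈ I, c i * M (x * z i) := ⟨_, fun _ => rfl⟩
  obtain ⟨F, hF⟩ : ∃ F : ℂ, F = ∑ i ∈ I, c i * f (z i) := ⟨_, rfl⟩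
  have V : ∀ x y, M (x * τ y) - M (x * y) = 2 * f x * f y := by
    intro x y; rw [hM, hM]; exact hVV x y
  obtain ⟨a, ha⟩ : ∃ a, f a ≠ 0 := Function.ne_iff.mp hf
  have odd : ∀ y, f (τ y) = - f y := by
    intro y
    have h1 := V a y
    have h2 := V a (τ y)
    rw [hτinv] at h2
    have : f a * (f (τ y) + f y) = 0 := by linear_combination (-h1 - h2) / 2
    have := (mul_eq_zero.mp this).resolve_left ha
    linear_combination this
  have e0 : ∀ x, g x - h x = 2 * F * f x := by
    intro x
    rw [hg, hh, hF, ← Finset.sum_sub_distrib, Finset.mul_sum, Finset.sum_mul]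
    refine Finset.sum_congr rfl fun i hi => ?_
    linear_combination c i * V x (z i)
  have e1 : ∀ x y, g (x * τ y) - g (x * y) = 2 * N x * f y := by
    intro x y
    rw [hg, hg, hN, ← Finset.sum_sub_distrib, Finset.mul_sum, Finset.sum_mul]
    refine Finset.sum_congr rfl fun i hi => ?_
    have := V (x * τ (z i)) y
    rw [mul_assoc, hw i hi, mul_assoc, hw i hi, ← mul_assoc, ← mul_assoc] at this
    linear_combination c i * this
  have e2 : ∀ x y, g (x * τ y) - h (x * y) = 2 * f x * M y := by
    intro x y
    rw [hg, hh, hM y, ← Finset.sum_sub_distrib, Finset.mul_sum]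
    refine Finset.sum_congr rfl fun i hi => ?_
    have := V x (y * z i)
    rw [hτmul, hw i hi, ← mul_assoc, ← mul_assoc] at this
    linear_combination c i * this
  have e3 : ∀ x y, h (x * τ y) - g (x * y) = 2 * f x * N y := by
    intro x y
    rw [hg, hh, hN y, ← Finset.sum_sub_distrib, Finset.mul_sum]
    refine Finset.sum_congr rfl fun i hi => ?_
    have := V x (y * τ (z i))
    rw [hτmul, hτinv, hz i hi, ← mul_assoc, ← mul_assoc] at this
    linear_combination c i * this
  have e4 : ∀ x y, h (x * τ y) - h (x * y) = 2 * M x * f y := by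
    intro x y
    rw [hh, hh, hM x, ← Finset.sum_sub_distrib, Finset.mul_sum, Finset.sum_mul]
    refine Finset.sum_congr rfl fun i hi => ?_
    have := V (x * z i) y
    rw [mul_assoc, hz i hi, mul_assoc, hz i hi, ← mul_assoc, ← mul_assoc] at this
    linear_combination c i * this
  have p1 : ∀ x y, F * f (x * y) = f x * M y - N x * f y := by
    intro x y
    linear_combination (e2 x y - e1 x y - e0 (x * y)) / 2
  have p2 : ∀ x y, F * f (x * y) = M x * f y - f x * N y := by
    intro x y
    linear_combination (e4 x y - e3 x y - e0 (x * y)) / 2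
  obtain ⟨l, hl⟩ : ∃ l, ∀ x, M x + N x = l * f x := by
    refine ⟨(M a + N a) / f a, fun x => ?_⟩
    field_simp
    linear_combination p2 a x - p1 a x
  have hgM : ∀ x, ∑ i ∈ I, c i * N (x * z i) = g x := by
    intro x
    rw [hg]
    simp_rw [hM, hN, Finset.mul_sum]
    rw [Finset.sum_comm]
    refine Finset.sum_congr rfl fun i hi => Finset.sum_congr rfl fun j hj => ?_
    rw [mul_assoc x, hz j hj, ← mul_assoc x]
    ring
  have q : ∀ x, h x + g x = l * M x := by
    intro x
    rw [← hgM, hh, hM, ← Finset.sum_add_distrib, Finset.mul_sum]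
    refine Finset.sum_congr rfl fun i hi => ?_
    linear_combination c i * hl (x * z i)
  have r1 : ∀ x y, F * M (x * y) = f x * h y - N x * M y := by
    intro x y
    rw [hM, hM y, hh, Finset.mul_sum, Finset.mul_sum, Finset.mul_sum, ← Finset.sum_sub_distrib]
    refine Finset.sum_congr rfl fun i hi => ?_
    rw [mul_assoc x]
    linear_combination c i * p1 x (y * z i)
  have r2 : ∀ x y, F * M (x * y) = M x * M y - g x * f y := by
    intro x y
    rw [hM, hM x, ← hgM, Finset.mul_sum, Finset.sum_mul, Finset.sum_mul, ← Finset.sum_sub_distrib]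
    refine Finset.sum_congr rfl fun i hi => ?_
    rw [mul_assoc x, ← hz i hi y, ← mul_assoc x]
    linear_combination c i * p1 (x * z i) y
  have s : ∀ x y, l * (f x * M y - M x * f y) = 0 := by
    intro x y
    linear_combination 2 * (r1 x y - r2 x y) - 2 * M y * hl x + f x * (q y - e0 y) + f y * (q x + e0 x)
  have l0 : l = 0 := by
    by_contra hl0
    obtain ⟨k, hk⟩ : ∃ k, ∀ x, M x = k * f x := by
      refine ⟨M a / f a, fun x => ?_⟩
      have := (mul_eq_zero.mp (s a x)).resolve_left hl0
      field_simp
      linear_combination this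
    have t := V a a
    have t' := V (τ a) (τ a)
    have o1 := odd (a * τ a)
    have o2 := odd (τ a * a)
    have o3 := odd (a * a)
    rw [hτmul, hτinv] at o1 o2
    rw [hτmul] at o3
    rw [hτinv, hk, hk, odd a, o3] at t'
    rw [hk, hk] at t
    have : f a * f a = 0 := by
      linear_combination (-t - t') / 4 + k * o1 / 8 + k * o2 / 8
    exact ha (by simpa using this)
  intro x
  have := q x
  have := e0 x
  rw [← hF]
  have hG : (∑ i ∈ I, ∑ j ∈ I, c i * c j * f (x * τ (z i) * z j)) = g x := by
    rw [hg]
    simp_rw [hM, Finset.mul_sum, mul_assoc (c _)]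
  rw [hG]
  subst l0
  linear_combination (q x + e0 x) / 2
end

section
/- Let f : S → ℂ be a non-zero solution of the integral Van Vleck equation. Then for all x ∈ S, Σ_{i∈I} Σ_{j∈I} c_i c_j f(x z_i z_j) = −f(x) · Σ_{i∈I} c_i f(z_i). -/
theorem stmt_4 {S ι : Type*} [Semigroup S] (τ : S → S)
    (hτmul : ∀ x y : S, τ (x * y) = τ y * τ x)
    (hτinv : ∀ x : S, τ (τ x) = x)
    (I : Finset ι) (c : ι → ℂ) (z : ι → S)
    (hz : ∀ i ∈ I, ∀ s : S, z i * s = s * z i)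
    (f : S → ℂ) (hf : f ≠ 0)
(hVV : ∀ x y : S,
      (∑ i ∈ I, c i * f (x * τ y * z i)) - (∑ i ∈ I, c i * f (x * y * z i))
        = 2 * f x * f y) :
    ∀ x : S, (∑ i ∈ I, ∑ j ∈ I, c i * c j * f (x * z i * z j))
      = -(f x * ∑ i ∈ I, c i * f (z i)) := by
  have hodd : ∀ y, f (τ y) = - f y := by
    intro y
    obtain ⟨x, hx⟩ := Function.ne_iff.mp hf
    have hx' : f x ≠ 0 := hx
    have h1 := hVV x y
    have h2 := hVV x (τ y)
    rw [hτinv] at h2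
    have h3 : 2 * f x * (f (τ y) + f y) = 0 := by linear_combination -h1 - h2
    have h4 : f (τ y) + f y = 0 := by
      rcases mul_eq_zero.mp h3 with h | h
      · exact absurd h (mul_ne_zero two_ne_zero hx')
      · exact h
    linear_combination h4
  intro x
  have hc : ∀ j ∈ I, ∀ s, τ (z j) * s = s * τ (z j) := by
    intro j hj s
    have h := congrArg τ (hz j hj (τ s))
    rw [hτmul, hτmul, hτinv] at h
    exact h.symm
  have e1 : ∀ j ∈ I, (∑ i ∈ I, c j * c i * f (x * τ (z j) * z i))
      - (∑ i ∈ I, c j * c i * f (x * z j * z i)) = 2 * f x * (c j * f (z j)) := by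
    intro j _
    have h := congrArg (fun t => c j * t) (hVV x (z j))
    simp only [mul_sub, Finset.mul_sum, ← mul_assoc] at h ⊢
    rw [h]; ring
  have e2 : ∀ j ∈ I, (∑ i ∈ I, c i * c j * f (x * τ (z i) * z j))
      + (∑ i ∈ I, c j * c i * f (x * τ (z j) * z i)) = 2 * f x * (c j * f (z j)) := by
    intro j hj
    have h := hVV (τ (z j)) x
    have h1 : ∑ i ∈ I, c i * f (τ (z j) * τ x * z i)
        = ∑ i ∈ I, -(c i * f (x * τ (z i) * z j)) := by
      refine Finset.sum_congr rfl fun i hi => ?_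
      have : τ (z j) * τ x * z i = τ (x * τ (z i) * z j) := by
        rw [hτmul, hτmul, hτinv, hz i hi (τ x), mul_assoc]
      rw [this, hodd]; ring
    rw [h1, Finset.sum_neg_distrib, hc j hj x, hodd] at h
    have h2 : ∑ i ∈ I, c i * c j * f (x * τ (z i) * z j)
        = c j * ∑ i ∈ I, c i * f (x * τ (z i) * z j) := by
      rw [Finset.mul_sum]; exact Finset.sum_congr rfl fun i _ => by ring
    have h3 : ∑ i ∈ I, c j * c i * f (x * τ (z j) * z i)
        = c j * ∑ i ∈ I, c i * f (x * τ (z j) * z i) := by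
      rw [Finset.mul_sum]; exact Finset.sum_congr rfl fun i _ => by ring
    rw [h2, h3]
    linear_combination (-c j) * h
  have s1 := Finset.sum_congr rfl e1
  have s2 := Finset.sum_congr rfl e2
  rw [Finset.sum_sub_distrib, ← Finset.mul_sum] at s1
  rw [Finset.sum_add_distrib, ← Finset.mul_sum, Finset.sum_comm] at s2
  linear_combination s2 / 2 - s1
end

section
/- Let f : S → ℂ be a non-zero solution of the integral Van Vleck equation. Then for all x ∈ S, Σ_{i∈I} c_i f(τ(x) z_i) = Σ_{i∈I} c_i f(x z_i). -/
theorem stmt_5 {S ι : Type*} [Semigroup S] (τ : S → S)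
    (hτmul : ∀ x y : S, τ (x * y) = τ y * τ x)
    (hτinv : ∀ x : S, τ (τ x) = x)
    (I : Finset ι) (c : ι → ℂ) (z : ι → S)
    (hz : ∀ i ∈ I, ∀ s : S, z i * s = s * z i)
    (f : S → ℂ) (hf : f ≠ 0)
(hVV : ∀ x y : S,
      (∑ i ∈ I, c i * f (x * τ y * z i)) - (∑ i ∈ I, c i * f (x * y * z i))
        = 2 * f x * f y) :
    ∀ x : S, (∑ i ∈ I, c i * f (τ x * z i)) = ∑ i ∈ I, c i * f (x * z i) := by
  obtain ⟨x0, hx0⟩ := Function.ne_iff.mp hf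
  replace hx0 : f x0 ≠ 0 := hx0
  have hodd : ∀ y, f (τ y) = - f y := by
    intro y
    have h1 := hVV x0 y
    have h2 := hVV x0 (τ y)
    rw [hτinv] at h2
    have h3 : f x0 * (f (τ y) + f y) = 0 := by linear_combination (-1/2) * h1 - (1/2) * h2
    have h4 := (mul_eq_zero.mp h3).resolve_left hx0
    linear_combination h4
  obtain ⟨F, hF⟩ : ∃ F : S → ℂ, ∀ x, F x = ∑ i ∈ I, c i * f (x * z i) := ⟨_, fun _ => rfl⟩
  obtain ⟨G, hG⟩ : ∃ G : S → ℂ, ∀ x, G x = ∑ i ∈ I, c i * F (x * z i) := ⟨_, fun _ => rfl⟩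
  obtain ⟨H, hH⟩ : ∃ H : S → ℂ, ∀ x, H x = ∑ i ∈ I, c i * F (x * τ (z i)) := ⟨_, fun _ => rfl⟩
  simp only [← hF] at hVV ⊢
  have hτz : ∀ i ∈ I, ∀ s : S, τ (z i) * s = s * τ (z i) := by
    intro i hi s
    have := congrArg τ (hz i hi (τ s))
    rw [hτmul, hτmul, hτinv] at this
    exact this.symm
  have hK : ∀ x, ∑ i ∈ I, c i * f (x * τ (z i)) = - F (τ x) := by
    intro x
    rw [hF, ← Finset.sum_neg_distrib]
    refine Finset.sum_congr rfl fun i hi => ?_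
    have := hodd (x * τ (z i))
    rw [hτmul, hτinv, hz i hi] at this
    rw [this]; ring
  have e1 : ∀ x y, H (x * τ y) - G (x * y) = 2 * f x * F y := by
    intro x y
    rw [hH, hG, hF, ← Finset.sum_sub_distrib, Finset.mul_sum]
    refine Finset.sum_congr rfl fun i hi => ?_
    have := hVV x (y * z i)
    rw [hτmul, hτz i hi, ← mul_assoc, ← mul_assoc] at this
    linear_combination c i * this
  have e2 : ∀ x y, G (x * τ y) - G (x * y) = 2 * F x * f y := by
    intro x y
    rw [hG, hG, hF, ← Finset.sum_sub_distrib, Finset.mul_sum, Finset.sum_mul]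
    refine Finset.sum_congr rfl fun i hi => ?_
    have := hVV (x * z i) y
    rw [mul_assoc, hz i hi, mul_assoc x, hz i hi, ← mul_assoc, ← mul_assoc] at this
    linear_combination c i * this
  have e3 : ∀ x y, H (x * τ y) - H (x * y) = - 2 * F (τ x) * f y := by
    intro x y
    have h0 : - 2 * F (τ x) * f y = 2 * (- F (τ x)) * f y := by ring
    rw [h0, ← hK, hH, hH, ← Finset.sum_sub_distrib, Finset.mul_sum, Finset.sum_mul]
    refine Finset.sum_congr rfl fun i hi => ?_
    have := hVV (x * τ (z i)) y
    rw [mul_assoc, hτz i hi, mul_assoc x, hτz i hi, ← mul_assoc, ← mul_assoc] at this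
    linear_combination c i * this
  have hD : ∀ x y, f x * (F y - F (τ y)) = f y * (F x - F (τ x)) := by
    intro x y
    have h1 := e1 x y
    have h2 := e2 x y
    have h3 := e3 x y
    have h4 := e1 x (τ y)
    rw [hτinv] at h4
    linear_combination (1/2) * (h3 - h1 + h4 + h2)
  obtain ⟨l, hl⟩ : ∃ l : ℂ, ∀ y, F y - F (τ y) = l * f y := by
    refine ⟨(F x0 - F (τ x0)) / f x0, fun y => ?_⟩
    have := hD x0 y
    field_simp
    linear_combination this
  by_cases hl0 : l = 0
  · intro x
    have := hl x
    rw [hl0] at this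
    linear_combination -this
  exfalso
  have k1 : ∀ x y, l * f (x * τ y) = F (x * y) - F (y * x) := by
    intro x y
    have h1 := hVV x y
    have h2 := hVV y x
    have h3 := hl (x * τ y)
    rw [hτmul, hτinv] at h3
    linear_combination -h3 + h1 - h2
  have k2 : ∀ x y, l * F (x * τ y) = G (x * y) - G (y * x) := by
    intro x y
    rw [hF, hG, hG, ← Finset.sum_sub_distrib, Finset.mul_sum]
    refine Finset.sum_congr rfl fun i hi => ?_
    have := k1 (x * z i) y
    rw [mul_assoc, hz i hi, mul_assoc x, hz i hi, ← mul_assoc, ← mul_assoc, ← mul_assoc] at this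
    linear_combination c i * this
  have k3 : ∀ x y, l * (- F (τ (x * τ y))) = G (x * y) - G (y * x) := by
    intro x y
    rw [← hK, hG, hG, ← Finset.sum_sub_distrib, Finset.mul_sum]
    refine Finset.sum_congr rfl fun i hi => ?_
    have := k1 x (y * z i)
    rw [hτmul, hτz i hi, mul_assoc y, hz i hi, ← mul_assoc, ← mul_assoc, ← mul_assoc] at this
    linear_combination c i * this
  have k4 : ∀ x y, F (x * y) + F (τ y * τ x) = 0 := by
    intro x y
    have h1 := k2 x (τ y)
    have h2 := k3 x (τ y)
    rw [hτinv] at h1 h2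
    rw [hτmul] at h2
    have : l * (F (x * y) + F (τ y * τ x)) = 0 := by linear_combination h1 - h2
    exact (mul_eq_zero.mp this).resolve_left hl0
  have a1 := k4 x0 x0
  have a2 := k4 x0 (τ x0)
  have a3 := k4 (τ x0) x0
  have a4 := hVV x0 x0
  have a5 := hVV (τ x0) (τ x0)
  rw [hτinv] at a2 a3 a5
  rw [hodd] at a5
  have : f x0 * f x0 = 0 := by
    linear_combination (1/4) * (-a1 + (1/2) * a2 + (1/2) * a3 - a4 - a5)
  exact hx0 (mul_self_eq_zero.mp this)
end

section
/- Let f : S → ℂ be a non-zero solution of the integral Van Vleck equation, and define g : S → ℂ by g(x) := (Σ_{i∈I} c_i f(x z_i)) / (Σ_{i∈I} c_i f(z_i)) (the denominator being non-zero). Then g is a non-zero solution of d'Alembert's functional equation g(xy) + g(xτ(y)) = 2 g(x) g(y) for all x, y ∈ S. -/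
theorem stmt_6 {S ι : Type*} [Semigroup S] (τ : S → S)
    (hτmul : ∀ x y : S, τ (x * y) = τ y * τ x)
    (hτinv : ∀ x : S, τ (τ x) = x)
    (I : Finset ι) (c : ι → ℂ) (z : ι → S)
    (hz : ∀ i ∈ I, ∀ s : S, z i * s = s * z i)
    (f : S → ℂ) (hf : f ≠ 0)
(hVV : ∀ x y : S,
      (∑ i ∈ I, c i * f (x * τ y * z i)) - (∑ i ∈ I, c i * f (x * y * z i))
        = 2 * f x * f y)
    (g : S → ℂ)
    (hg : ∀ x : S, g x = (∑ i ∈ I, c i * f (x * z i)) / (∑ i ∈ I, c i * f (z i))) :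
    g ≠ 0 ∧ ∀ x y : S, g (x * y) + g (x * τ y) = 2 * g x * g y := by
  obtain ⟨F, hF⟩ : ∃ F : S → ℂ, ∀ x, F x = ∑ i ∈ I, c i * f (x * z i) := ⟨_, fun _ => rfl⟩
  obtain ⟨D, hD⟩ : ∃ D : ℂ, D = ∑ i ∈ I, c i * f (z i) := ⟨_, rfl⟩
  simp only [← hF, ← hD] at hVV hg
  obtain ⟨y₀, hy₀⟩ : ∃ y, f y ≠ 0 := Function.ne_iff.mp hf
  have hodd : ∀ y, f (τ y) = - f y := by
    intro y
    have h1 := hVV y₀ y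
    have h2 := hVV y₀ (τ y)
    rw [hτinv] at h2
    apply mul_left_cancel₀ hy₀
    linear_combination (-1/2) * h1 - (1/2) * h2
  have hzt : ∀ i ∈ I, ∀ s : S, τ (z i) * s = s * τ (z i) := by
    intro i hi s
    have h := congrArg τ (hz i hi (τ s))
    rw [hτmul, hτmul, hτinv] at h
    exact h.symm
  obtain ⟨G, hG⟩ : ∃ G : S → ℂ, ∀ x, G x = ∑ k ∈ I, c k * F (x * z k) := ⟨_, fun _ => rfl⟩
  obtain ⟨H, hH⟩ : ∃ H : S → ℂ, ∀ x, H x = ∑ k ∈ I, c k * F (x * τ (z k)) :=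
    ⟨_, fun _ => rfl⟩
  have h1 : ∀ x, H x - G x = 2 * f x * D := by
    intro x
    rw [hH, hG, hD, ← Finset.sum_sub_distrib, Finset.mul_sum]
    refine Finset.sum_congr rfl fun k _ => ?_
    linear_combination c k * hVV x (z k)
  have h2 : ∀ y, H (τ y) - H y = - (2 * f y * D) := by
    intro y
    rw [hH, hH, hD, ← Finset.sum_sub_distrib, Finset.mul_sum, ← Finset.sum_neg_distrib]
    refine Finset.sum_congr rfl fun k hk => ?_
    have h := hVV (τ (z k)) y
    rw [hzt k hk, hzt k hk, hodd] at h
    linear_combination c k * h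
  have h3 : ∀ x, H (τ x) = - H x := by
    intro x
    simp only [hH, hF, Finset.mul_sum]
    rw [Finset.sum_comm, ← Finset.sum_neg_distrib]
    refine Finset.sum_congr rfl fun i hi => ?_
    rw [← Finset.sum_neg_distrib]
    refine Finset.sum_congr rfl fun k hk => ?_
    have e : τ (x * τ (z i) * z k) = τ x * τ (z k) * z i := by
      rw [hτmul, hτmul, hτinv, hz i hi, ← mul_assoc, hzt k hk]
    rw [← e, hodd]
    ring
  have hHf : ∀ x, H x = D * f x := by
    intro x
    linear_combination (-1/2) * h2 x + (1/2) * h3 x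
  have hGf : ∀ x, G x = - (D * f x) := by
    intro x
    linear_combination hHf x - h1 x
  have hFne : ∃ x, F x ≠ 0 := by
    by_contra! h
    have := hVV y₀ y₀
    rw [h, h] at this
    apply hy₀
    have h' : f y₀ * f y₀ = 0 := by linear_combination (-1/2) * this
    exact mul_self_eq_zero.mp h'
  have hA : ∀ x y, G (x * τ y) - G (x * y) = 2 * F x * f y := by
    intro x y
    rw [hG, hG, hF, ← Finset.sum_sub_distrib, Finset.mul_sum, Finset.sum_mul]
    refine Finset.sum_congr rfl fun k hk => ?_
    have h := hVV (x * z k) y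
    rw [mul_assoc x, mul_assoc x, hz k hk, hz k hk, ← mul_assoc, ← mul_assoc] at h
    linear_combination c k * h
  have hD0 : D ≠ 0 := by
    intro h0
    obtain ⟨x, hx⟩ := hFne
    have h := hA x y₀
    rw [hGf, hGf, h0] at h
    have h' : F x * f y₀ = 0 := by linear_combination (-1/2) * h
    exact mul_ne_zero hx hy₀ h'
  have hB : ∀ x y, D * (f (x * τ y) + f (x * y)) = 2 * f x * F y := by
    intro x y
    have h : H (x * τ y) - G (x * y) = 2 * f x * F y := by
      rw [hH, hG, hF y, ← Finset.sum_sub_distrib, Finset.mul_sum]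
      refine Finset.sum_congr rfl fun k hk => ?_
      have h := hVV x (y * z k)
      rw [hτmul, hzt k hk, ← mul_assoc, ← mul_assoc] at h
      linear_combination c k * h
    rw [hHf, hGf] at h
    linear_combination h
  have hC : ∀ x y, D * (F (x * τ y) + F (x * y)) = 2 * F x * F y := by
    intro x y
    simp only [hF x, hF (x * τ y), hF (x * y)]
    rw [← Finset.sum_add_distrib, Finset.mul_sum, Finset.mul_sum, Finset.sum_mul]
    refine Finset.sum_congr rfl fun k hk => ?_
    have h := hB (x * z k) y
    rw [mul_assoc x, mul_assoc x, hz k hk, hz k hk, ← mul_assoc, ← mul_assoc] at h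
    linear_combination c k * h
  refine ⟨?_, ?_⟩
  · obtain ⟨x, hx⟩ := hFne
    refine Function.ne_iff.mpr ⟨x, ?_⟩
    rw [hg]
    exact div_ne_zero hx hD0
  · intro x y
    simp only [hg]
    field_simp
    linear_combination hC x y
end

section
/- Let f : S → ℂ be a non-zero solution of the integral Van Vleck equation, and define g : S → ℂ by g(x) := (Σ_{i∈I} c_i f(x z_i)) / (Σ_{i∈I} c_i f(z_i)) (the denominator being non-zero). Then Σ_{i∈I} Σ_{j∈I} c_i c_j g(z_i z_j) ≠ 0 and Σ_{i∈I} c_i g(z_i) = 0. -/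
theorem stmt_7 {S ι : Type*} [Semigroup S] (τ : S → S)
    (hτmul : ∀ x y : S, τ (x * y) = τ y * τ x)
    (hτinv : ∀ x : S, τ (τ x) = x)
    (I : Finset ι) (c : ι → ℂ) (z : ι → S)
    (hz : ∀ i ∈ I, ∀ s : S, z i * s = s * z i)
    (f : S → ℂ) (hf : f ≠ 0)
(hVV : ∀ x y : S,
      (∑ i ∈ I, c i * f (x * τ y * z i)) - (∑ i ∈ I, c i * f (x * y * z i))
        = 2 * f x * f y)
    (g : S → ℂ)
    (hg : ∀ x : S, g x = (∑ i ∈ I, c i * f (x * z i)) / (∑ i ∈ I, c i * f (z i))) :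
    (∑ i ∈ I, ∑ j ∈ I, c i * c j * g (z i * z j)) ≠ 0 ∧
    (∑ i ∈ I, c i * g (z i)) = 0 := by
  obtain ⟨a, ha⟩ : ∃ a, f a ≠ 0 := by
    by_contra h
    push Not at h
    exact hf (funext h)
  have odd : ∀ y, f (τ y) = - f y := by
    intro y
    have h1 := hVV a y
    have h2 := hVV a (τ y)
    rw [hτinv] at h2
    have : f a * (f (τ y) + f y) = 0 := by linear_combination (-1/2 : ℂ) * h1 - (1/2 : ℂ) * h2
    rcases mul_eq_zero.1 this with h | h
    · exact absurd h ha
    · linear_combination h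
  have hzt : ∀ i ∈ I, ∀ s : S, τ (z i) * s = s * τ (z i) := by
    intro i hi s
    have := congrArg τ (hz i hi (τ s))
    rw [hτmul, hτmul, hτinv] at this
    exact this.symm
  obtain ⟨F, hF⟩ : ∃ F : S → ℂ, ∀ x, F x = ∑ i ∈ I, c i * f (x * z i) := ⟨_, fun _ => rfl⟩
  obtain ⟨G, hG⟩ : ∃ G : S → ℂ, ∀ x, G x = ∑ i ∈ I, c i * f (x * τ (z i)) := ⟨_, fun _ => rfl⟩
  obtain ⟨k, hk⟩ : ∃ k : S → ℂ, ∀ x, k x = ∑ i ∈ I, c i * F (x * z i) := ⟨_, fun _ => rfl⟩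
  obtain ⟨h, hh⟩ : ∃ h : S → ℂ, ∀ x, h x = ∑ i ∈ I, c i * F (x * τ (z i)) := ⟨_, fun _ => rfl⟩
  obtain ⟨α, hα⟩ : ∃ α : ℂ, α = ∑ i ∈ I, c i * f (z i) := ⟨_, rfl⟩
  have VV : ∀ x y, F (x * τ y) - F (x * y) = 2 * f x * f y := by
    intro x y
    rw [hF, hF]
    exact hVV x y
  have e1 : ∀ x y, h (x * τ y) - k (x * y) = 2 * f x * F y := by
    intro x y
    rw [hh, hk, hF, ← Finset.sum_sub_distrib, Finset.mul_sum]
    refine Finset.sum_congr rfl fun i hi => ?_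
    have := VV x (y * z i)
    rw [hτmul, hzt i hi, ← mul_assoc, ← mul_assoc] at this
    linear_combination c i * this
  have e2 : ∀ x y, k (x * τ y) - k (x * y) = 2 * F x * f y := by
    intro x y
    rw [hk, hk, hF, ← Finset.sum_sub_distrib, Finset.mul_sum, Finset.sum_mul]
    refine Finset.sum_congr rfl fun i hi => ?_
    have := VV (x * z i) y
    rw [mul_assoc, mul_assoc, hz i hi, hz i hi, ← mul_assoc, ← mul_assoc] at this
    linear_combination c i * this
  have e3 : ∀ x y, h (x * τ y) - h (x * y) = 2 * G x * f y := by
    intro x y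
    rw [hh, hh, hG, ← Finset.sum_sub_distrib, Finset.mul_sum, Finset.sum_mul]
    refine Finset.sum_congr rfl fun i hi => ?_
    have := VV (x * τ (z i)) y
    rw [mul_assoc, mul_assoc, hzt i hi, hzt i hi, ← mul_assoc, ← mul_assoc] at this
    linear_combination c i * this
  have e0 : ∀ x, h x - k x = 2 * α * f x := by
    intro x
    rw [hh, hk, hα, ← Finset.sum_sub_distrib, Finset.mul_sum, Finset.sum_mul]
    refine Finset.sum_congr rfl fun i hi => ?_
    linear_combination c i * VV x (z i)
  have eFt : ∀ y, F (τ y) = - G y := by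
    intro y
    rw [hF, hG, ← Finset.sum_neg_distrib]
    refine Finset.sum_congr rfl fun i hi => ?_
    have := odd (τ y * z i)
    rw [hτmul, hτinv, hzt i hi] at this
    linear_combination c i * this
  have s1 : ∀ x y, α * f (x * τ y) = f x * F y - F x * f y := by
    intro x y
    linear_combination (1/2 : ℂ) * e1 x y - (1/2 : ℂ) * e2 x y - (1/2 : ℂ) * e0 (x * τ y)
  have s2 : ∀ x y, α * f (x * y) = f x * F y - G x * f y := by
    intro x y
    linear_combination (1/2 : ℂ) * e1 x y - (1/2 : ℂ) * e3 x y - (1/2 : ℂ) * e0 (x * y)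
  have hα0 : α ≠ 0 := by
    intro h0
    have l : ∀ x, F x * f a = f x * F a := by
      intro x
      have := s1 x a
      rw [h0] at this
      linear_combination this
    have o1 : f (a * τ a) = 0 := by
      have := odd (a * τ a)
      rw [hτmul, hτinv] at this
      linear_combination (1/2 : ℂ) * this
    have o2 : f (τ a * a) = 0 := by
      have := odd (τ a * a)
      rw [hτmul, hτinv] at this
      linear_combination (1/2 : ℂ) * this
    have o3 : f (τ a * τ a) = - f (a * a) := by
      have := odd (a * a)
      rwa [hτmul] at this
    have v1 := VV a a
    have v2 := VV (τ a) a
    have l1 := l (a * τ a)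
    have l2 := l (τ a * a)
    have l3 := l (τ a * τ a)
    have l4 := l (a * a)
    rw [o1] at l1
    rw [o2] at l2
    rw [o3] at l3
    rw [odd] at v2
    have : f a * f a * f a = 0 := by
      linear_combination (-1/4 : ℂ) * f a * v1 + (1/4 : ℂ) * f a * v2 + (1/4 : ℂ) * l1 - (1/4 : ℂ) * l4 - (1/4 : ℂ) * l3 + (1/4 : ℂ) * l2
    simp [ha] at this
  obtain ⟨ν, hν⟩ : ∃ ν : ℂ, ∀ x, F x + G x = 2 * ν * f x := by
    refine ⟨(F a + G a) / (2 * f a), fun x => ?_⟩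
    have t1 := s1 x a
    have t2 := s2 x (τ a)
    rw [eFt, odd] at t2
    field_simp
    linear_combination t1 - t2
  have fc : ∀ x y, f (x * y) = f (y * x) := by
    intro x y
    apply mul_left_cancel₀ hα0
    linear_combination s2 x y - s2 y x - f y * hν x + f x * hν y
  have Fc : ∀ x y, F (x * y) = F (y * x) := by
    intro x y
    rw [hF, hF]
    refine Finset.sum_congr rfl fun i hi => ?_
    rw [mul_assoc, fc, mul_assoc, hz i hi, ← mul_assoc]
  have hν0 : ν = 0 := by
    by_contra hne
    have z1 : ∀ x y, f (x * τ y) = 0 := by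
      intro x y
      have v1 := VV x y
      have v2 := VV y x
      have t := eFt (x * τ y)
      rw [hτmul, hτinv] at t
      have u := hν (x * τ y)
      have o := odd (x * τ y)
      rw [hτmul, hτinv] at o
      have : ν * f (x * τ y) = 0 := by
        linear_combination (1/2 : ℂ) * v1 - (1/2 : ℂ) * v2 + (1/2 : ℂ) * t - (1/2 : ℂ) * u + (1/2 : ℂ) * Fc x y
      exact (mul_eq_zero.1 this).resolve_left hne
    have z2 : ∀ x y, f (x * y) = 0 := by
      intro x y
      have := z1 x (τ y)
      rwa [hτinv] at this
    have v := VV a a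
    rw [hF, hF] at v
    simp [z2, ha] at v
  have FG : ∀ x, G x = - F x := by
    intro x
    have := hν x
    rw [hν0] at this
    linear_combination this
  have hk2 : ∀ x, h x = - k x := by
    intro x
    have : h x = ∑ i ∈ I, c i * G (x * z i) := by
      rw [hh]
      simp only [hF, hG, Finset.mul_sum]
      rw [Finset.sum_comm]
      refine Finset.sum_congr rfl fun i hi => Finset.sum_congr rfl fun j hj => ?_
      rw [mul_assoc x, mul_assoc x, hz i hi]
      ring
    rw [this, hk, ← Finset.sum_neg_distrib]
    refine Finset.sum_congr rfl fun i hi => ?_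
    rw [FG]
    ring
  have hk3 : ∀ x, k x = - α * f x := by
    intro x
    linear_combination (-1/2 : ℂ) * e0 x + (1/2 : ℂ) * hk2 x
  have hB : ∑ i ∈ I, c i * G (z i) = 0 := by
    have : ∑ i ∈ I, c i * G (z i) = - ∑ i ∈ I, c i * G (z i) := by
      conv_lhs => simp only [hG, Finset.mul_sum]
      rw [Finset.sum_comm]
      simp only [hG, Finset.mul_sum, ← Finset.sum_neg_distrib]
      refine Finset.sum_congr rfl fun i hi => Finset.sum_congr rfl fun j hj => ?_
      have := odd (z i * τ (z j))
      rw [hτmul, hτinv] at this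
      rw [this]
      ring
    linear_combination (1/2 : ℂ) * this
  have hg' : ∀ x, g x = F x / α := by
    intro x
    rw [hg, hF, hα]
  constructor
  · have : ∑ i ∈ I, ∑ j ∈ I, c i * c j * g (z i * z j) = - α := by
      have e : ∀ i ∈ I, ∑ j ∈ I, c i * c j * g (z i * z j) = - (c i * f (z i)) := by
        intro i hi
        have : ∑ j ∈ I, c i * c j * g (z i * z j) = c i * k (z i) / α := by
          rw [hk, Finset.mul_sum, Finset.sum_div]
          refine Finset.sum_congr rfl fun j hj => ?_
          rw [hg']
          ring
        rw [this, hk3]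
        field_simp
      rw [Finset.sum_congr rfl e, Finset.sum_neg_distrib, ← hα]
    rw [this]
    exact neg_ne_zero.2 hα0
  · have : ∑ i ∈ I, c i * g (z i) = - (∑ i ∈ I, c i * G (z i)) / α := by
      rw [← Finset.sum_neg_distrib, Finset.sum_div]
      refine Finset.sum_congr rfl fun i hi => ?_
      rw [hg', FG]
      ring
    rw [this, hB]
    simp
end

section
/- Let f : S → ℂ be a non-zero solution of the integral Van Vleck equation, and define g : S → ℂ by g(x) := (Σ_{i∈I} c_i f(x z_i)) / (Σ_{i∈I} c_i f(z_i)) (the denominator being non-zero). Then there exists a non-zero multiplicative function χ : S → ℂ (i.e. χ(xy) = χ(x)χ(y) for all x, y ∈ S) such that g(x) = (χ(x) + χ(τ(x)))/2 for all x ∈ S. -/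
/-- A Jordan-type functional on a semigroup is multiplicative. -/
theorem jordan_mul {S : Type*} [Semigroup S] (k : S → ℂ)
    (h : ∀ x y, k (x * y) + k (y * x) = 2 * k x * k y) (x y : S) :
    k (x * y) = k x * k y := by
  have hsq : ∀ x, k (x * x) = k x * k x := fun x => by linear_combination (h x x) / 2
  have htri : ∀ x y, k (x * y * x) = k x * k x * k y := by
    intro x y
    have h1 := h x (x * y)
    have h2 := h x (y * x)
    have h3 := h (x * x) y
    have h4 := h x y
    simp only [← mul_assoc] at h1 h2 h3
    rw [hsq] at h3
    linear_combination (h1 + h2 - h3) / 2 + k x * h4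
  have h1 := h (x * y) (y * x)
  have e1 : x * y * (y * x) = x * (y * y) * x := by simp only [mul_assoc]
  have e2 : y * x * (x * y) = y * (x * x) * y := by simp only [mul_assoc]
  rw [e1, e2, htri, htri, hsq, hsq] at h1
  have h2 := h x y
  have h3 : (k (x * y) - k (y * x)) ^ 2 = 0 := by
    linear_combination (k (x * y) + k (y * x) + 2 * k x * k y) * h2 + 2 * h1
  have h4 := pow_eq_zero_iff (two_ne_zero) |>.1 h3
  linear_combination h2 / 2 + h4 / 2

/-- The Van Vleck equation without measure has no nonzero solution. -/
theorem vv_zero {S : Type*} [Semigroup S] (τ : S → S)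
    (hτmul : ∀ x y : S, τ (x * y) = τ y * τ x)
    (hτinv : ∀ x : S, τ (τ x) = x) (k : S → ℂ) (hodd : ∀ x, k (τ x) = - k x)
    (h : ∀ x y, k (x * τ y) - k (x * y) = - k x * k y) (x : S) : k x = 0 := by
  have hJ : ∀ x y, k (x * y) + k (y * x) = 2 * k x * k y := by
    intro x y
    have h1 := h x y
    have h2 := h y x
    have h3 := hodd (x * τ y)
    rw [hτmul, hτinv] at h3
    linear_combination -h1 - h2 + h3
  have hm := jordan_mul k hJ
  have h1 := h x x
  rw [hm, hm, hodd] at h1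
  have : k x * k x = 0 := by linear_combination -h1
  exact mul_self_eq_zero.1 this

theorem stmt_8 {S ι : Type*} [Semigroup S] (τ : S → S)
    (hτmul : ∀ x y : S, τ (x * y) = τ y * τ x)
    (hτinv : ∀ x : S, τ (τ x) = x)
    (I : Finset ι) (c : ι → ℂ) (z : ι → S)
    (hz : ∀ i ∈ I, ∀ s : S, z i * s = s * z i)
    (f : S → ℂ) (hf : f ≠ 0)
(hVV : ∀ x y : S,
      (∑ i ∈ I, c i * f (x * τ y * z i)) - (∑ i ∈ I, c i * f (x * y * z i))
        = 2 * f x * f y)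
    (g : S → ℂ)
    (hg : ∀ x : S, g x = (∑ i ∈ I, c i * f (x * z i)) / (∑ i ∈ I, c i * f (z i))) :
    ∃ χ : S → ℂ, χ ≠ 0 ∧ (∀ x y : S, χ (x * y) = χ x * χ y) ∧
      ∀ x : S, g x = (χ x + χ (τ x)) / 2 := by
  obtain ⟨a, ha⟩ : ∃ a, f a ≠ 0 := by
    by_contra hcon
    push Not at hcon
    exact hf (funext hcon)
  obtain ⟨F, hF⟩ : ∃ F : S → ℂ, ∀ x, F x = ∑ i ∈ I, c i * f (x * z i) := ⟨_, fun _ => rfl⟩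
  obtain ⟨D, hD⟩ : ∃ D : ℂ, D = ∑ i ∈ I, c i * f (z i) := ⟨_, rfl⟩
  simp only [← hF, ← hD] at hVV hg
  have hodd : ∀ y, f (τ y) = - f y := by
    intro y
    have h1 := hVV a y
    have h2 := hVV a (τ y)
    rw [hτinv] at h2
    have h3 : f a * (f (τ y) + f y) = 0 := by linear_combination -(h1 + h2) / 2
    have h4 := (mul_eq_zero.1 h3).resolve_left ha
    linear_combination h4
  have hzτ : ∀ i ∈ I, ∀ s : S, τ (z i) * s = s * τ (z i) := by
    intro i hi s
    have := congrArg τ (hz i hi (τ s))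
    rw [hτmul, hτmul, hτinv] at this
    exact this.symm
  have hA : ∀ x, (∑ j ∈ I, c j * F (x * τ (z j))) - (∑ j ∈ I, c j * F (x * z j)) = 2 * D * f x := by
    intro x
    rw [hD, ← Finset.sum_sub_distrib, Finset.mul_sum, Finset.sum_mul]
    refine Finset.sum_congr rfl fun j hj => ?_
    linear_combination c j * hVV x (z j)
  have hB : ∀ x y, (∑ j ∈ I, c j * F (x * τ y * z j)) - (∑ j ∈ I, c j * F (x * y * z j))
      = 2 * F x * f y := by
    intro x y
    rw [hF x, ← Finset.sum_sub_distrib, Finset.mul_sum, Finset.sum_mul]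
    refine Finset.sum_congr rfl fun j hj => ?_
    have h := hVV (x * z j) y
    rw [mul_assoc x (z j), hz j hj, mul_assoc x (z j) y, hz j hj, ← mul_assoc, ← mul_assoc] at h
    linear_combination c j * h
  have hC : ∀ x y, (∑ j ∈ I, c j * F (x * τ y * τ (z j))) - (∑ j ∈ I, c j * F (x * y * z j))
      = 2 * f x * F y := by
    intro x y
    rw [hF y, ← Finset.sum_sub_distrib, Finset.mul_sum]
    refine Finset.sum_congr rfl fun j hj => ?_
    have h := hVV x (y * z j)
    rw [hτmul, hzτ j hj, ← mul_assoc, ← mul_assoc] at h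
    linear_combination c j * h
  have hK : ∀ x y, D * f (x * τ y) = f x * F y - F x * f y := by
    intro x y
    linear_combination (hC x y - hB x y - hA (x * τ y)) / 2
  have hD0 : D ≠ 0 := by
    intro h0
    have hl : ∀ y, F y = F a / f a * f y := by
      intro y
      have := hK a y
      rw [h0] at this
      field_simp
      linear_combination -this
    obtain ⟨l, hl'⟩ : ∃ l, l = F a / f a := ⟨_, rfl⟩
    rw [← hl'] at hl
    simp only [hl] at hVV
    have hl0 : l ≠ 0 := by
      intro h
      have := hVV a a
      rw [h] at this
      have : f a * f a = 0 := by linear_combination -this / 2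
      exact ha (mul_self_eq_zero.1 this)
    have := vv_zero τ hτmul hτinv (fun x => -(2 / l) * f x)
      (fun x => by simp only [hodd]; ring)
      (fun x y => by
        have := hVV x y
        field_simp
        linear_combination -this) a
    simp [hl0, ha] at this
  have hFg : ∀ x, F x = D * g x := fun x => by rw [hg]; field_simp
  have hK1 : ∀ x y, f (x * τ y) = f x * g y - g x * f y := by
    intro x y
    have := hK x y
    rw [hFg, hFg] at this
    apply mul_left_cancel₀ hD0
    linear_combination this
  have hVg : ∀ x y, D * (g (x * τ y) - g (x * y)) = 2 * f x * f y := by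
    intro x y
    have := hVV x y
    rw [hFg, hFg] at this
    linear_combination this
  -- g composed with τ
  obtain ⟨δ, hδ⟩ : ∃ δ : ℂ, δ = (∑ i ∈ I, c i * g (z i)) / D := ⟨_, rfl⟩
  have hgτ : ∀ x, g (τ x) = g x - δ * f x := by
    intro x
    have h1 : F (τ x) = g x * D - f x * ∑ i ∈ I, c i * g (z i) := by
      rw [hF, hD, Finset.mul_sum, Finset.mul_sum, ← Finset.sum_sub_distrib]
      refine Finset.sum_congr rfl fun j hj => ?_
      have h2 := hodd (x * τ (z j))
      rw [hτmul, hτinv, hz j hj, hK1] at h2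
      linear_combination c j * h2
    rw [hFg] at h1
    rw [hδ]
    field_simp
    linear_combination h1
  have hfm : ∀ x y, f (x * y) = f x * g y + g x * f y - δ * f x * f y := by
    intro x y
    have := hK1 x (τ y)
    rw [hτinv, hgτ, hodd] at this
    linear_combination this
  have hfc : ∀ x y, f (x * y) = f (y * x) := by
    intro x y
    rw [hfm, hfm]; ring
  have hgc : ∀ x y, g (x * y) = g (y * x) := by
    intro x y
    apply mul_left_cancel₀ hD0
    rw [← hFg, ← hFg, hF, hF]
    refine Finset.sum_congr rfl fun j hj => ?_
    rw [mul_assoc, hfc, mul_assoc, hz j hj, ← mul_assoc]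
  have hgk : ∀ x y, D * g (x * y) = f x * (∑ j ∈ I, c j * g (y * z j)) + D * g x * g y
      - δ * D * f x * g y := by
    intro x y
    have h1 : F (x * y) = f x * (∑ j ∈ I, c j * g (y * z j)) + (g x - δ * f x) * F y := by
      rw [hF, hF, Finset.mul_sum, Finset.mul_sum, ← Finset.sum_add_distrib]
      refine Finset.sum_congr rfl fun j hj => ?_
      rw [mul_assoc, hfm]
      ring
    rw [hFg, hFg] at h1
    linear_combination h1
  obtain ⟨β, hβ⟩ : ∃ β : ℂ, ∀ x y, g (x * y) = g x * g y + β * f x * f y := by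
    refine ⟨((∑ j ∈ I, c j * g (a * z j)) - δ * D * g a) / (D * f a), fun x y => ?_⟩
    have h1 := hgk x y
    have h2 := hgk y a
    have h3 := hgk a y
    rw [hgc a y] at h3
    have h4 : f a * ((∑ j ∈ I, c j * g (y * z j)) - δ * D * g y)
      = f y * ((∑ j ∈ I, c j * g (a * z j)) - δ * D * g a) := by
      linear_combination h2 - h3
    field_simp
    linear_combination f a * h1 + f x * h4
  have hg0 : ¬ ∀ x, g x = 0 := by
    intro h
    have := hVg a a
    rw [h, h] at this
    have : f a * f a = 0 := by linear_combination -this / 2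
    exact ha (mul_self_eq_zero.1 this)
  have hrel : ∀ x y, D * (- δ * g x * f y - 2 * β * f x * f y) = 2 * f x * f y := by
    intro x y
    have := hVg x y
    rw [hβ, hβ, hgτ, hodd] at this
    linear_combination this
  have hδ0 : δ = 0 := by
    by_contra hne
    have hl : ∀ x, g x = (-(2 + 2 * D * β) / (D * δ)) * f x := by
      intro x
      have := hrel x a
      field_simp
      apply mul_left_cancel₀ ha
      linear_combination -this
    apply hg0
    intro x
    have hz0 : ∀ x y, f (x * y) = 0 := by
      intro x y
      have := hK1 x (τ y)
      rw [hτinv, hl, hl x] at this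
      rw [this]; ring
    apply mul_left_cancel₀ hD0
    rw [← hFg, hF]
    simp [hz0]
  subst hδ0
  have hβD : D * β = -1 := by
    have := hrel a a
    apply mul_left_cancel₀ (mul_ne_zero ha ha)
    linear_combination -this / 2
  obtain ⟨α, hα⟩ : ∃ α : ℂ, β = α * α := by
    obtain ⟨α, h⟩ := IsAlgClosed.exists_pow_nat_eq β (n := 2) (by norm_num)
    exact ⟨α, by rw [← h]; ring⟩
  have hfin : ∀ x, g x = ((g x + α * f x) + (g (τ x) + α * f (τ x))) / 2 := by
    intro x
    rw [hgτ, hodd]; ring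
  refine ⟨fun x => g x + α * f x, ?_, ?_, hfin⟩
  · intro h
    apply hg0
    intro x
    have h1 := congrFun h x
    have h2 := congrFun h (τ x)
    simp only [Pi.zero_apply] at h1 h2
    rw [hfin, h1, h2]; simp
  · intro x y
    simp only [hβ, hfm, hα]
    ring
end

section
/- Let f : S → ℂ be a non-zero solution of the integral Van Vleck equation. Then there exists a multiplicative function χ : S → ℂ (i.e. χ(xy) = χ(x)χ(y) for all x, y ∈ S) with Σ_{i∈I} c_i χ(z_i) ≠ 0 and Σ_{i∈I} c_i χ(τ(z_i)) = −Σ_{i∈I} c_i χ(z_i), such that f(x) = ((χ(x) − χ(τ(x)))/2) · Σ_{i∈I} c_i χ(τ(z_i)) for all x ∈ S. -/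
theorem aux_jordan {S : Type*} [Semigroup S] (p : S → ℂ)
    (hp : ∀ x y : S, p (x * y) + p (y * x) = 2 * p x * p y) (x y : S) :
    p (x * y) = p x * p y := by
  have hsq : ∀ x, p (x * x) = p x ^ 2 := fun x => by
    linear_combination (1 / 2) * hp x x
  have tri : ∀ x y, p (x * y * x) = p x ^ 2 * p y := fun x y => by
    have h1 := hp x (x * y)
    have h2 := hp x (y * x)
    have h3 := hp (x * x) y
    have h4 := hp x y
    have h5 := hsq x
    simp only [← mul_assoc] at h1 h2 h3
    rw [h5] at h3
    linear_combination (1 / 2) * h1 + (1 / 2) * h2 - (1 / 2) * h3 + p x * h4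
  have h1 := hp (x * y) (y * x)
  have h2 := tri x (y * y)
  have h3 := tri y (x * x)
  have h4 := hp x y
  simp only [← mul_assoc] at h1 h2 h3
  rw [h2, h3, hsq, hsq] at h1
  have h5 : (p (x * y) - p x * p y) ^ 2 = 0 := by
    have : p (y * x) = 2 * p x * p y - p (x * y) := by linear_combination h4
    rw [this] at h1
    linear_combination (1 / 2) * h1
  have h6 := pow_eq_zero_iff (two_ne_zero) |>.1 h5
  linear_combination h6

theorem stmt_9 {S ι : Type*} [Semigroup S] (τ : S → S)
    (hτmul : ∀ x y : S, τ (x * y) = τ y * τ x)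
    (hτinv : ∀ x : S, τ (τ x) = x)
    (I : Finset ι) (c : ι → ℂ) (z : ι → S)
    (hz : ∀ i ∈ I, ∀ s : S, z i * s = s * z i)
    (f : S → ℂ) (hf : f ≠ 0)
(hVV : ∀ x y : S,
      (∑ i ∈ I, c i * f (x * τ y * z i)) - (∑ i ∈ I, c i * f (x * y * z i))
        = 2 * f x * f y) :
    ∃ χ : S → ℂ, (∀ x y : S, χ (x * y) = χ x * χ y) ∧
      (∑ i ∈ I, c i * χ (z i)) ≠ 0 ∧
      (∑ i ∈ I, c i * χ (τ (z i))) = -(∑ i ∈ I, c i * χ (z i)) ∧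
      ∀ x : S, f x = ((χ x - χ (τ x)) / 2) * ∑ i ∈ I, c i * χ (τ (z i)) := by
  obtain ⟨a, ha⟩ : ∃ a, f a ≠ 0 := Function.ne_iff.1 hf
  have hz' : ∀ i ∈ I, ∀ s : S, τ (z i) * s = s * τ (z i) := fun i hi s => by
    have := congrArg τ (hz i hi (τ s))
    rw [hτmul, hτmul, hτinv] at this
    exact this.symm
  obtain ⟨g, hg⟩ : ∃ g : S → ℂ, ∀ x, g x = ∑ i ∈ I, c i * f (x * z i) := ⟨_, fun _ => rfl⟩
  obtain ⟨q, hq⟩ : ∃ q : S → ℂ, ∀ x, q x = ∑ i ∈ I, c i * f (x * τ (z i)) := ⟨_, fun _ => rfl⟩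
  obtain ⟨pg, hpg⟩ : ∃ q : S → ℂ, ∀ x, q x = ∑ i ∈ I, c i * g (x * z i) := ⟨_, fun _ => rfl⟩
  obtain ⟨qg, hqg⟩ : ∃ q : S → ℂ, ∀ x, q x = ∑ i ∈ I, c i * g (x * τ (z i)) := ⟨_, fun _ => rfl⟩
  obtain ⟨m, hm⟩ : ∃ m : ℂ, m = ∑ i ∈ I, c i * f (z i) := ⟨_, rfl⟩
  have V : ∀ x y, g (x * τ y) - g (x * y) = 2 * f x * f y := fun x y => by
    rw [hg, hg]; exact hVV x y
  have odd : ∀ x, f (τ x) = -f x := fun x => by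
    have h1 := V a x
    have h2 := V a (τ x)
    rw [hτinv] at h2
    have : f a * (f (τ x) + f x) = 0 := by linear_combination (-1 / 2) * h1 - (1 / 2) * h2
    have := (mul_eq_zero.1 this).resolve_left ha
    linear_combination this
  have gτ : ∀ x, g (τ x) = -q x := fun x => by
    rw [hg, hq, ← Finset.sum_neg_distrib]
    refine Finset.sum_congr rfl fun i hi => ?_
    have : τ x * z i = τ (x * τ (z i)) := by rw [hτmul, hτinv, hz i hi]
    rw [this, odd]; ring
  have E1 : ∀ x y, pg (x * τ y) - pg (x * y) = 2 * g x * f y := fun x y => by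
    rw [hpg, hpg, hg x, ← Finset.sum_sub_distrib, Finset.mul_sum, Finset.sum_mul]
    refine Finset.sum_congr rfl fun i hi => ?_
    have := V (x * z i) y
    rw [mul_assoc x, hz i hi, ← mul_assoc, mul_assoc x (z i) y, hz i hi, ← mul_assoc] at this
    linear_combination c i * this
  have E2 : ∀ x y, qg (x * τ y) - pg (x * y) = 2 * f x * g y := fun x y => by
    rw [hpg, hqg, hg y, ← Finset.sum_sub_distrib, Finset.mul_sum]
    refine Finset.sum_congr rfl fun i hi => ?_
    have := V x (y * z i)
    rw [hτmul, hz' i hi, ← mul_assoc, ← mul_assoc] at this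
    linear_combination c i * this
  have E3 : ∀ x y, pg (x * τ y) - qg (x * y) = 2 * f x * q y := fun x y => by
    rw [hpg, hqg, hq y, ← Finset.sum_sub_distrib, Finset.mul_sum]
    refine Finset.sum_congr rfl fun i hi => ?_
    have := V x (y * τ (z i))
    rw [hτmul, hτinv, hz i hi, ← mul_assoc, ← mul_assoc] at this
    linear_combination c i * this
  have E5 : ∀ x, qg x - pg x = 2 * f x * m := fun x => by
    rw [hpg, hqg, hm, ← Finset.sum_sub_distrib, Finset.mul_sum]
    refine Finset.sum_congr rfl fun i hi => ?_
    linear_combination c i * V x (z i)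
  have E4 : ∀ x y, qg (x * τ y) - qg (x * y) = 2 * q x * f y := fun x y => by
    rw [hqg, hqg, hq x, ← Finset.sum_sub_distrib, Finset.mul_sum, Finset.sum_mul]
    refine Finset.sum_congr rfl fun i hi => ?_
    have := V (x * τ (z i)) y
    rw [mul_assoc x, hz' i hi, ← mul_assoc, mul_assoc x (τ (z i)) y, hz' i hi, ← mul_assoc] at this
    linear_combination c i * this
  have F1 : ∀ x y, f (x * y) * m = g x * f y - f x * q y := fun x y => by
    linear_combination (-1 / 2) * E5 (x * y) + (1 / 2) * E1 x y - (1 / 2) * E3 x y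
  have F2 : ∀ x y, (g x + q x) * f y = f x * (g y + q y) := fun x y => by
    linear_combination (-1 / 2) * E1 x y + (1 / 2) * E2 x y + (1 / 2) * E3 x y - (1 / 2) * E4 x y
  obtain ⟨k, hk⟩ : ∃ k : ℂ, ∀ x, q x = 2 * k * f x - g x := ⟨(g a + q a) / (2 * f a), fun x => by
    field_simp
    linear_combination F2 x a⟩
  obtain ⟨h, hh⟩ : ∃ h : S → ℂ, ∀ x, g x = k * f x + h x := ⟨fun x => g x - k * f x, fun x => by ring⟩
  have F3 : ∀ x y, f (x * y) * m = h x * f y + f x * h y := fun x y => by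
    rw [F1, hk, hh, hh]; ring
  have F4 : ∀ x y, 2 * k * f (x * τ y) = g (x * y) - g (y * x) := fun x y => by
    have h1 := gτ (x * τ y)
    rw [hτmul, hτinv, hk] at h1
    linear_combination h1 + V x y - V y x
  by_cases hm0 : m = 0
  · exfalso
    have ha0 : h a = 0 := by
      have := F3 a a
      rw [hm0] at this
      have : f a * h a = 0 := by linear_combination (-1 / 2) * this
      exact (mul_eq_zero.1 this).resolve_left ha
    have h0 : ∀ x, h x = 0 := fun x => by
      have := F3 x a
      rw [hm0, ha0] at this
      have : h x * f a = 0 := by linear_combination -this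
      exact (mul_eq_zero.1 this).resolve_right ha
    have gk : ∀ x, g x = k * f x := fun x => by rw [hh, h0, add_zero]
    have hk0 : k ≠ 0 := by
      rintro rfl
      have := V a a
      rw [gk, gk] at this
      have : f a * f a = 0 := by linear_combination (-1 / 2) * this
      exact ha (mul_self_eq_zero.1 this)
    have J : ∀ x y, k * (f (x * y) + f (y * x)) = -4 * f x * f y := fun x y => by
      have h1 := F4 x y
      have h2 := V x y
      rw [gk, gk] at h1 h2
      linear_combination h1 - 2 * h2
    have P := aux_jordan (fun x => -(2 / k) * f x) (fun x y => by
      have := J x y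
      field_simp
      linear_combination -this) a (τ a)
    have h1 := odd (a * τ a)
    rw [hτmul, hτinv] at h1
    have h2 : f (a * τ a) = 0 := by linear_combination (1 / 2) * h1
    simp only [h2, odd] at P
    field_simp at P
    simp [ha] at P
  · have fc : ∀ x y, f (x * y) = f (y * x) := fun x y => by
      apply mul_right_cancel₀ hm0
      rw [F3, F3]; ring
    have gc : ∀ x y, g (x * y) = g (y * x) := fun x y => by
      rw [hg, hg]
      refine Finset.sum_congr rfl fun i hi => ?_
      rw [mul_assoc, fc, mul_assoc, hz i hi, mul_assoc]
    have hk0 : k = 0 := by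
      by_contra hk0
      have f0 : ∀ x y, f (x * y) = 0 := fun x y => by
        have := F4 x (τ y)
        rw [gc, sub_self, hτinv] at this
        simpa [hk0] using this
      have g0 : ∀ x, g x = 0 := fun x => by rw [hg]; simp [f0]
      have := V a a
      simp [g0, ha] at this
    obtain ⟨H, hH⟩ : ∃ H : S → ℂ, ∀ x, g x = m * H x := ⟨fun x => g x / m, fun x => by field_simp⟩
    have hq' : ∀ x, q x = -(m * H x) := fun x => by rw [hk, hk0, hH]; ring
    have Hτ : ∀ x, H (τ x) = H x := fun x => by
      have := gτ x
      rw [hq', hH] at this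
      apply mul_left_cancel₀ hm0
      linear_combination this
    have F5 : ∀ x y, f (x * y) = H x * f y + f x * H y := fun x y => by
      apply mul_right_cancel₀ hm0
      rw [F1, hq', hH]; ring
    have F6 : ∀ x y w, (H (x * y) - H x * H y) * f w = f x * (H (y * w) - H y * H w) := by
      intro x y w
      have h1 := F5 (x * y) w
      have h2 := F5 x (y * w)
      rw [mul_assoc] at h1
      rw [F5 x y] at h1
      rw [F5 y w] at h2
      linear_combination h2 - h1
    obtain ⟨α, hα⟩ : ∃ α : ℂ, ∀ x y, H (x * y) = H x * H y + α * f x * f y := by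
      refine ⟨(H (a * a) - H a * H a) / (f a * f a), fun x y => ?_⟩
      have h1 := F6 x y a
      have h2 := F6 a y a
      have h3 := F6 a a y
      field_simp
      have h4 : (H (y * a) - H y * H a) * f a = (H (a * a) - H a * H a) * f y := by
        apply mul_left_cancel₀ ha
        have h5 := F6 a a y
        have h6 := F6 a y a
        linear_combination -f a * h6 - f a * h5
      linear_combination f a * h1 + f x * h4
    have hαm : α * m = -1 := by
      have h1 := V a a
      rw [hH, hH, hα, hα, Hτ, odd] at h1
      have : f a * f a * (α * m + 1) = 0 := by linear_combination (-1 / 2) * h1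
      have := (mul_eq_zero.1 this).resolve_left (mul_ne_zero ha ha)
      linear_combination this
    have HM : ∑ i ∈ I, c i * H (z i) = 0 := by
      have h1 : ∑ i ∈ I, c i * q (z i) = -(∑ i ∈ I, c i * q (z i)) := by
        simp only [hq, Finset.mul_sum]
        conv_rhs => rw [Finset.sum_comm]
        rw [← Finset.sum_neg_distrib]
        refine Finset.sum_congr rfl fun i hi => ?_
        rw [← Finset.sum_neg_distrib]
        refine Finset.sum_congr rfl fun j hj => ?_
        have := odd (z i * τ (z j))
        rw [hτmul, hτinv] at this
        rw [this]; ring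
      have h2 : ∑ i ∈ I, c i * q (z i) = -m * ∑ i ∈ I, c i * H (z i) := by
        rw [Finset.mul_sum]
        refine Finset.sum_congr rfl fun i hi => ?_
        rw [hq']; ring
      rw [h2] at h1
      have : m * ∑ i ∈ I, c i * H (z i) = 0 := by linear_combination (-1 / 2) * h1
      exact (mul_eq_zero.1 this).resolve_left hm0
    obtain ⟨β, hβ⟩ : ∃ β : ℂ, α = β * β := by
      obtain ⟨β, hβ⟩ := IsAlgClosed.exists_pow_nat_eq α (n := 2) (by norm_num)
      exact ⟨β, by rw [← hβ]; ring⟩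
    have hβ0 : β ≠ 0 := by
      rintro rfl
      simp [hβ] at hαm
    have S1 : ∑ i ∈ I, c i * (H (z i) + β * f (z i)) = β * m := by
      rw [hm, Finset.mul_sum, ← add_zero (∑ i ∈ I, β * (c i * f (z i))), ← HM,
        ← Finset.sum_add_distrib]
      exact Finset.sum_congr rfl fun i hi => by ring
    have S2 : ∑ i ∈ I, c i * (H (τ (z i)) + β * f (τ (z i))) = -(β * m) := by
      rw [hm, Finset.mul_sum, ← add_zero (-∑ i ∈ I, β * (c i * f (z i))), ← HM,
        ← Finset.sum_neg_distrib, ← Finset.sum_add_distrib]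
      exact Finset.sum_congr rfl fun i hi => by rw [Hτ, odd]; ring
    refine ⟨fun x => H x + β * f x, fun x y => ?_, ?_, ?_, fun x => ?_⟩
    · simp only [hα, F5, hβ]; ring
    · simp only [S1]; exact mul_ne_zero hβ0 hm0
    · simp only [S1, S2]
    · simp only [S2]
      rw [Hτ, odd]
      rw [hβ] at hαm
      linear_combination f x * hαm
end

section
/- Let χ : S → ℂ be a multiplicative function (i.e. χ(xy) = χ(x)χ(y) for all x, y ∈ S) with Σ_{i∈I} c_i χ(z_i) ≠ 0 and Σ_{i∈I} c_i χ(τ(z_i)) = −Σ_{i∈I} c_i χ(z_i). Then the function f(x) := ((χ(x) − χ(τ(x)))/2) · Σ_{i∈I} c_i χ(τ(z_i)) is a non-zero solution of the integral Van Vleck equation. -/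
theorem stmt_10 {S ι : Type*} [Semigroup S] (τ : S → S)
    (hτmul : ∀ x y : S, τ (x * y) = τ y * τ x)
    (hτinv : ∀ x : S, τ (τ x) = x)
    (I : Finset ι) (c : ι → ℂ) (z : ι → S)
    (hz : ∀ i ∈ I, ∀ s : S, z i * s = s * z i)
    (χ : S → ℂ) (hχ : ∀ x y : S, χ (x * y) = χ x * χ y)
    (hχ1 : (∑ i ∈ I, c i * χ (z i)) ≠ 0)
    (hχ2 : (∑ i ∈ I, c i * χ (τ (z i))) = -(∑ i ∈ I, c i * χ (z i)))
    (f : S → ℂ)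
    (hf : ∀ x : S, f x = ((χ x - χ (τ x)) / 2) * ∑ i ∈ I, c i * χ (τ (z i))) :
    f ≠ 0 ∧ ∀ x y : S,
      (∑ i ∈ I, c i * f (x * τ y * z i)) - (∑ i ∈ I, c i * f (x * y * z i))
        = 2 * f x * f y := by
  set A := ∑ i ∈ I, c i * χ (z i) with hA
  set B := ∑ i ∈ I, c i * χ (τ (z i)) with hB
  constructor
  · intro h0
    have hBne : B ≠ 0 := by rw [hχ2]; exact neg_ne_zero.mpr hχ1
    have hinv : ∀ x, χ (τ x) = χ x := by
      intro x
      have h1 := hf x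
      rw [h0, Pi.zero_apply] at h1
      have h2 := (mul_eq_zero.mp h1.symm).resolve_right hBne
      linear_combination (-2) * h2
    have hBA : B = A := by
      rw [hA, hB]
      exact Finset.sum_congr rfl (fun i _ => by rw [hinv])
    apply hχ1
    linear_combination (1 / 2) * hχ2 - (1 / 2) * hBA
  · have key : ∀ w, ∑ i ∈ I, c i * f (w * z i) = B / 2 * (χ w * A - χ (τ w) * B) := by
      intro w
      have e : ∀ i ∈ I, c i * f (w * z i)
          = B / 2 * (χ w * (c i * χ (z i)) - χ (τ w) * (c i * χ (τ (z i)))) := by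
        intro i _
        rw [hf, hτmul, hχ, hχ]
        ring
      rw [Finset.sum_congr rfl e, ← Finset.mul_sum, Finset.sum_sub_distrib,
        ← Finset.mul_sum, ← Finset.mul_sum]
    intro x y
    rw [key, key, hf x, hf y, hτmul, hτmul, hτinv, hχ, hχ, hχ, hχ, hχ2]
    ring
end

section
/- Let S be a semigroup, τ : S → S an involution, and z₀ a fixed element of the center of S. If f : S → ℂ is a non-zero function satisfying f(x τ(y) z₀) − f(x y z₀) = 2 f(x) f(y) for all x, y ∈ S, then there exists a multiplicative function χ : S → ℂ (i.e. χ(xy) = χ(x)χ(y) for all x, y ∈ S) with χ(z₀) ≠ 0 and χ(τ(z₀)) = −χ(z₀) such that f(x) = χ(τ(z₀)) · (χ(x) − χ(τ(x)))/2 for all x ∈ S. -/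
theorem stmt_11 {S : Type*} [Semigroup S] (τ : S → S)
    (hτmul : ∀ x y : S, τ (x * y) = τ y * τ x)
    (hτinv : ∀ x : S, τ (τ x) = x)
    (z₀ : S) (hz₀ : ∀ s : S, z₀ * s = s * z₀)
    (f : S → ℂ) (hf : f ≠ 0)
    (hVV : ∀ x y : S, f (x * τ y * z₀) - f (x * y * z₀) = 2 * f x * f y) :
    ∃ χ : S → ℂ, (∀ x y : S, χ (x * y) = χ x * χ y) ∧
      χ z₀ ≠ 0 ∧ χ (τ z₀) = -χ z₀ ∧
      ∀ x : S, f x = χ (τ z₀) * ((χ x - χ (τ x)) / 2) := by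
  obtain ⟨w, hw⟩ : ∃ w, w = τ z₀ := ⟨_, rfl⟩
  have hτw : τ w = z₀ := by rw [hw, hτinv]
  have hwc : ∀ s : S, w * s = s * w := by
    intro s
    have h := congrArg τ (hz₀ (τ s))
    rw [hτmul, hτmul, hτinv, ← hw] at h
    exact h.symm
  obtain ⟨b, hb⟩ : ∃ b, f b ≠ 0 := by
    by_contra! h
    exact hf (funext h)
  have odd : ∀ y, f (τ y) = - f y := by
    intro y
    have h1 := hVV b y
    have h2 := hVV b (τ y)
    rw [hτinv] at h2
    have h3 : f b * (f (τ y) + f y) = 0 := by linear_combination (-h1 - h2) / 2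
    have h4 := (mul_eq_zero.mp h3).resolve_left hb
    linear_combination h4
  have key : ∀ x a, f (x * a * z₀) + f (x * a * w) = f (x * τ a * z₀) - f (τ a * x * z₀) := by
    intro x a
    have h1 := hVV x (τ a)
    have h2 := hVV (τ a) x
    rw [hτinv] at h1
    have h3 : τ a * τ x * z₀ = τ (x * a * w) := by
      rw [hτmul, hτmul, hτw, hz₀]
    rw [h3, odd] at h2
    linear_combination h1 - h2
  have Fz : ∀ x, f (x * z₀ * z₀) + f (x * z₀ * w) = 0 := by
    intro x
    rw [key x z₀, ← hw, hwc, sub_self]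
  have hzw : z₀ * w = w * z₀ := hz₀ w
  have e1 : ∀ x, f (x * z₀ * z₀) = - (f x * f z₀) := by
    intro x
    have h1 := hVV x z₀
    rw [← hw, mul_assoc, ← hzw, ← mul_assoc] at h1
    linear_combination (Fz x - h1) / 2
  have e2 : ∀ x, f (x * z₀ * w) = f x * f z₀ := by
    intro x
    linear_combination Fz x - e1 x
  have fz : f z₀ ≠ 0 := by
    intro h0
    have h1 : ∀ x, f (x * z₀) = 0 := by
      intro x
      have h := hVV (x * z₀) b
      have a1 : x * z₀ * τ b * z₀ = x * τ b * z₀ * z₀ := by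
        rw [mul_assoc x, hz₀, ← mul_assoc]
      have a2 : x * z₀ * b * z₀ = x * b * z₀ * z₀ := by
        rw [mul_assoc x, hz₀, ← mul_assoc]
      rw [a1, a2, e1, e1, h0] at h
      have h3 : f (x * z₀) * f b = 0 := by linear_combination -h / 2
      exact (mul_eq_zero.mp h3).resolve_right hb
    have h := hVV b b
    rw [h1, h1] at h
    have : f b * f b = 0 := by linear_combination -h / 2
    exact hb (mul_self_eq_zero.mp this)
  have F0 : ∀ x, f (x * w) = - f (x * z₀) := by
    intro x
    have h := Fz (x * w)
    have a1 : x * w * z₀ * z₀ = (x * z₀) * z₀ * w := by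
      simp only [mul_assoc, hwc]
    have a2 : x * w * z₀ * w = (x * w) * z₀ * w := rfl
    rw [a1, a2, e2, e2] at h
    have h3 : f z₀ * (f (x * z₀) + f (x * w)) = 0 := by linear_combination h
    have h4 := (mul_eq_zero.mp h3).resolve_left fz
    linear_combination h4
  have fzz : f (z₀ * z₀) = 0 := by
    have h1 := F0 z₀
    have h2 := odd (z₀ * w)
    rw [hτmul, hτw, ← hw] at h2
    linear_combination h1 - h2 / 2
  obtain ⟨g, hg⟩ : ∃ g : S → ℂ, ∀ x, f (x * z₀) = f z₀ * g x :=
    ⟨fun x => f (x * z₀) / f z₀, fun x => by field_simp⟩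
  have geven : ∀ x, g (τ x) = g x := by
    intro x
    apply mul_left_cancel₀ fz
    rw [← hg, ← hg, ← hτw, ← hτmul, odd, hτw, hwc, F0, neg_neg]
  have gz : g z₀ = 0 := by
    have h := hg z₀
    rw [fzz] at h
    exact (mul_eq_zero.mp h.symm).resolve_left fz
  have gxz : ∀ x, g (x * z₀) = - f x := by
    intro x
    apply mul_left_cancel₀ fz
    rw [← hg, e1]
    ring
  have gadd : ∀ x y, f z₀ * g (x * y) = f z₀ * (g x * g y) - f x * f y := by
    intro x y
    have h1 := hVV x y
    have h2 := hVV (x * z₀) (y * z₀)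
    have a1 : x * z₀ * τ (y * z₀) * z₀ = (x * τ y * z₀) * z₀ * w := by
      rw [hτmul, ← hw, hwc]
      simp only [mul_assoc]
      rw [← mul_assoc z₀ (τ y), hz₀ (τ y), ← hzw]
      simp only [mul_assoc]
    have a2 : x * z₀ * (y * z₀) * z₀ = (x * y * z₀) * z₀ * z₀ := by
      simp only [mul_assoc]
      rw [← mul_assoc z₀ y, hz₀ y, mul_assoc]
    rw [a1, a2, e1, e2] at h2
    simp only [hg] at h1 h2
    apply mul_left_cancel₀ fz
    linear_combination h2 / 2 - f z₀ * h1 / 2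
  have fadd : ∀ x y, f (x * y) = g x * f y + f x * g y := by
    intro x y
    have h := gadd x (y * z₀)
    rw [← mul_assoc, gxz, gxz, hg] at h
    apply mul_left_cancel₀ fz
    linear_combination -h
  obtain ⟨l, hl⟩ : ∃ l : ℂ, l ^ 2 = -1 / f z₀ :=
    IsAlgClosed.exists_pow_nat_eq _ (by norm_num)
  have hl' : l ^ 2 * f z₀ = -1 := by rw [hl]; field_simp
  have hl0 : l ≠ 0 := by
    rintro rfl
    norm_num at hl'
  refine ⟨fun x => g x + l * f x, ?_, ?_, ?_, ?_⟩
  · intro x y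
    show g (x * y) + l * f (x * y) = (g x + l * f x) * (g y + l * f y)
    rw [fadd]
    apply mul_left_cancel₀ fz
    linear_combination gadd x y - f x * f y * hl'
  · simp [gz, hl0, fz]
  · simp [geven, odd, gz]
  · intro x
    simp only [geven, odd, gz]
    linear_combination f x * hl'
end

section
/- Let f : S → ℂ be a solution of the integral Kannappan equation. Then f(τ(x)) = f(x) for all x ∈ S. -/
theorem stmt_12 {S ι : Type*} [Semigroup S] (τ : S → S)
    (hτmul : ∀ x y : S, τ (x * y) = τ y * τ x)
    (hτinv : ∀ x : S, τ (τ x) = x)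
    (I : Finset ι) (c : ι → ℂ) (z : ι → S)
    (hz : ∀ i ∈ I, ∀ s : S, z i * s = s * z i)
    (f : S → ℂ)
(hK : ∀ x y : S,
      (∑ i ∈ I, c i * f (x * y * z i)) + (∑ i ∈ I, c i * f (x * τ y * z i))
        = 2 * f x * f y) :
    ∀ x : S, f (τ x) = f x := by
  intro x
  by_cases h : ∃ a, f a ≠ 0
  · obtain ⟨a, ha⟩ := h
    have h1 := hK a x
    have h2 := hK a (τ x)
    rw [hτinv] at h2
    have h3 : 2 * f a * f (τ x) = 2 * f a * f x := by
      rw [← h1, ← h2, add_comm]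
    exact mul_left_cancel₀ (mul_ne_zero two_ne_zero ha) h3
  · push Not at h
    rw [h, h]
end

section
/- Let f : S → ℂ be a solution of the integral Kannappan equation. Then Σ_{i∈I} c_i f(z_i) ≠ 0 if and only if f is not identically zero. -/
theorem stmt_13 {S ι : Type*} [Semigroup S] (τ : S → S)
    (hτmul : ∀ x y : S, τ (x * y) = τ y * τ x)
    (hτinv : ∀ x : S, τ (τ x) = x)
    (I : Finset ι) (c : ι → ℂ) (z : ι → S)
    (hz : ∀ i ∈ I, ∀ s : S, z i * s = s * z i)
    (f : S → ℂ)
(hK : ∀ x y : S,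
      (∑ i ∈ I, c i * f (x * y * z i)) + (∑ i ∈ I, c i * f (x * τ y * z i))
        = 2 * f x * f y) :
    (∑ i ∈ I, c i * f (z i)) ≠ 0 ↔ f ≠ 0 := by
  constructor
  · rintro h rfl
    exact h (by simp)
  intro hf hA
  obtain ⟨a, ha⟩ : ∃ a, f a ≠ 0 := by
    by_contra hcon
    push Not at hcon
    exact hf (funext hcon)
  have hzt : ∀ i ∈ I, ∀ s : S, τ (z i) * s = s * τ (z i) := by
    intro i hi s
    have h := congrArg τ (hz i hi (τ s))
    rw [hτmul, hτmul, hτinv] at h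
    exact h.symm
  obtain ⟨g, hg⟩ : ∃ g : S → ℂ, ∀ x, g x = ∑ i ∈ I, c i * f (x * z i) := ⟨_, fun _ => rfl⟩
  obtain ⟨g', hg'⟩ : ∃ g : S → ℂ, ∀ x, g x = ∑ i ∈ I, c i * f (x * τ (z i)) :=
    ⟨_, fun _ => rfl⟩
  obtain ⟨G, hG⟩ : ∃ G : S → ℂ, ∀ x, G x = ∑ i ∈ I, c i * g (x * z i) := ⟨_, fun _ => rfl⟩
  obtain ⟨H, hH⟩ : ∃ G : S → ℂ, ∀ x, G x = ∑ i ∈ I, c i * g (x * τ (z i)) :=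
    ⟨_, fun _ => rfl⟩
  have hk : ∀ x y, g (x * y) + g (x * τ y) = 2 * f x * f y := by
    intro x y
    rw [hg, hg, hK]
  have hev : ∀ y, f (τ y) = f y := by
    intro y
    have h1 := hk a y
    have h2 := hk a (τ y)
    rw [hτinv] at h2
    have h3 : (2 * f a) * f (τ y) = (2 * f a) * f y := by rw [← h1, ← h2]; ring
    exact mul_left_cancel₀ (by simpa using ha) h3
  have h0 : ∀ x, H x = - G x := by
    intro x
    have : G x + H x = 2 * f x * ∑ i ∈ I, c i * f (z i) := by
      rw [hG, hH, ← Finset.sum_add_distrib, Finset.mul_sum]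
      refine Finset.sum_congr rfl fun i _ => ?_
      rw [← mul_add, hk]; ring
    rw [hA] at this
    linear_combination this
  have h1 : ∀ x y, G (x * y) + G (x * τ y) = 2 * g x * f y := by
    intro x y
    rw [hG, hG, hg, ← Finset.sum_add_distrib, Finset.mul_sum, Finset.sum_mul]
    refine Finset.sum_congr rfl fun i hi => ?_
    rw [← mul_add, mul_assoc x, mul_assoc x, ← hz i hi, ← hz i hi, ← mul_assoc, ← mul_assoc, hk]
    ring
  have h4 : ∀ x y, H (x * y) + H (x * τ y) = 2 * g' x * f y := by
    intro x y
    rw [hH, hH, hg', ← Finset.sum_add_distrib, Finset.mul_sum, Finset.sum_mul]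
    refine Finset.sum_congr rfl fun i hi => ?_
    rw [← mul_add, mul_assoc x, mul_assoc x, ← hzt i hi, ← hzt i hi, ← mul_assoc, ← mul_assoc, hk]
    ring
  have h2 : ∀ x y, G (x * y) + H (x * τ y) = 2 * f x * g y := by
    intro x y
    rw [hG, hH, hg, ← Finset.sum_add_distrib, Finset.mul_sum]
    refine Finset.sum_congr rfl fun i hi => ?_
    rw [← mul_add, mul_assoc x, mul_assoc x, ← hzt i hi, ← hτmul, hk]
    ring
  have hgg : ∀ x, g' x = - g x := by
    intro x
    have e1 := h1 x a
    have e4 := h4 x a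
    rw [h0, h0] at e4
    have : (2 * f a) * g' x = (2 * f a) * (- g x) := by linear_combination -e1 - e4
    exact mul_left_cancel₀ (by simpa using ha) this
  have hodd : ∀ x, g (τ x) = - g x := by
    intro x
    rw [← hgg, hg, hg']
    refine Finset.sum_congr rfl fun i hi => ?_
    rw [← hev (x * τ (z i)), hτmul, hτinv, hz i hi]
  have hGev : ∀ x, G (τ x) = G x := by
    intro x
    have : G x = - H x := by rw [h0]; ring
    rw [this, hG, hH, ← Finset.sum_neg_distrib]
    refine Finset.sum_congr rfl fun i hi => ?_
    rw [← mul_neg, ← hodd, hτmul, hτinv, hz i hi]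
  have hm : ∀ x y, G (x * τ y) = g x * f y - f x * g y := by
    intro x y
    have e1 := h1 x y
    have e2 := h2 x y
    rw [h0] at e2
    linear_combination (e1 - e2) / 2
  have hm0 : ∀ x y, G (x * τ y) = 0 := by
    intro x y
    have e1 := hm x y
    have e2 := hm y x
    rw [← hGev, hτmul, hτinv] at e2
    linear_combination (e1 + e2) / 2
  have hg0 : ∀ x, g x = 0 := by
    intro x
    have e1 := h1 x a
    have e2 := hm0 x (τ a)
    rw [hτinv] at e2
    rw [e2, hm0] at e1
    have : (2 * f a) * g x = (2 * f a) * 0 := by linear_combination -e1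
    exact mul_left_cancel₀ (by simpa using ha) this
  have e := hk a a
  rw [hg0, hg0] at e
  have : f a * f a = 0 := by linear_combination -e / 2
  exact ha (mul_self_eq_zero.mp this)
end

section
/- Let f : S → ℂ be a solution of the integral Kannappan equation. Then for all x ∈ S, Σ_{i∈I} Σ_{j∈I} c_i c_j f(x τ(z_i) z_j) = f(x) · Σ_{i∈I} c_i f(z_i) and Σ_{i∈I} Σ_{j∈I} c_i c_j f(x z_i z_j) = f(x) · Σ_{i∈I} c_i f(z_i). -/
theorem stmt_14 {S ι : Type*} [Semigroup S] (τ : S → S)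
    (hτmul : ∀ x y : S, τ (x * y) = τ y * τ x)
    (hτinv : ∀ x : S, τ (τ x) = x)
    (I : Finset ι) (c : ι → ℂ) (z : ι → S)
    (hz : ∀ i ∈ I, ∀ s : S, z i * s = s * z i)
    (f : S → ℂ)
(hK : ∀ x y : S,
      (∑ i ∈ I, c i * f (x * y * z i)) + (∑ i ∈ I, c i * f (x * τ y * z i))
        = 2 * f x * f y) :
    ∀ x : S,
      (∑ i ∈ I, ∑ j ∈ I, c i * c j * f (x * τ (z i) * z j))
        = f x * ∑ i ∈ I, c i * f (z i) ∧
      (∑ i ∈ I, ∑ j ∈ I, c i * c j * f (x * z i * z j))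
        = f x * ∑ i ∈ I, c i * f (z i) := by
  by_cases hf0 : ∀ x, f x = 0
  · intro x
    simp [hf0]
  push Not at hf0
  obtain ⟨a, ha⟩ := hf0
  have hft : ∀ y, f (τ y) = f y := by
    intro y
    have h1 := hK a y
    have h2 := hK a (τ y)
    rw [hτinv] at h2
    have h3 : f a * (f (τ y) - f y) = 0 := by linear_combination (h1 - h2) / 2
    rcases mul_eq_zero.1 h3 with h | h
    · exact absurd h ha
    · exact sub_eq_zero.1 h
  have hw : ∀ i ∈ I, ∀ s : S, τ (z i) * s = s * τ (z i) := by
    intro i hi s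
    have h := congrArg τ (hz i hi (τ s))
    rw [hτmul, hτmul, hτinv] at h
    exact h.symm
  obtain ⟨F, hF⟩ : ∃ F : S → ℂ, ∀ x, F x = ∑ i ∈ I, c i * f (x * z i) := ⟨_, fun _ => rfl⟩
  obtain ⟨A, hA⟩ : ∃ A : S → ℂ, ∀ x, A x = ∑ i ∈ I, c i * F (x * τ (z i)) :=
    ⟨_, fun _ => rfl⟩
  obtain ⟨B, hB⟩ : ∃ B : S → ℂ, ∀ x, B x = ∑ i ∈ I, c i * F (x * z i) := ⟨_, fun _ => rfl⟩
  have hE : ∀ x y, F (x * y) + F (x * τ y) = 2 * f x * f y := by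
    intro x y
    rw [hF, hF]
    exact hK x y
  have hG : ∀ i ∈ I, ∀ x, f (x * τ (z i)) = f (τ x * z i) := by
    intro i hi x
    rw [← hft, hτmul, hτinv, hz i hi]
  have h1 : ∀ x y, B (x * y) + A (x * τ y) = 2 * f x * F y := by
    intro x y
    rw [hA, hB, hF, ← Finset.sum_add_distrib, Finset.mul_sum]
    refine Finset.sum_congr rfl fun i hi => ?_
    have h := hE x (y * z i)
    rw [hτmul, hw i hi, ← mul_assoc, ← mul_assoc] at h
    linear_combination c i * h
  have h2 : ∀ x y, B (x * y) + B (x * τ y) = 2 * F x * f y := by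
    intro x y
    rw [hB, hB, hF, ← Finset.sum_add_distrib, Finset.mul_sum, Finset.sum_mul]
    refine Finset.sum_congr rfl fun i hi => ?_
    have h := hE (x * z i) y
    rw [mul_assoc, hz i hi, mul_assoc x (z i), hz i hi, ← mul_assoc, ← mul_assoc] at h
    linear_combination c i * h
  have h3 : ∀ x y, A (x * y) + A (x * τ y) = 2 * F (τ x) * f y := by
    intro x y
    rw [hA, hA, hF, ← Finset.sum_add_distrib, Finset.mul_sum, Finset.sum_mul]
    refine Finset.sum_congr rfl fun i hi => ?_
    have h := hE (x * τ (z i)) y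
    rw [mul_assoc, hw i hi, mul_assoc x (τ (z i)), hw i hi, ← mul_assoc, ← mul_assoc,
      hG i hi] at h
    linear_combination c i * h
  have hsum : ∀ x, A x + B x = 2 * f x * ∑ i ∈ I, c i * f (z i) := by
    intro x
    rw [hA, hB, ← Finset.sum_add_distrib, Finset.mul_sum]
    refine Finset.sum_congr rfl fun i hi => ?_
    linear_combination c i * hE x (z i)
  have hAexp : ∀ x, A x = ∑ i ∈ I, ∑ j ∈ I, c i * c j * f (x * τ (z i) * z j) := by
    intro x
    simp only [hA, hF, Finset.mul_sum, mul_assoc]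
  have hBexp : ∀ x, B x = ∑ i ∈ I, ∑ j ∈ I, c i * c j * f (x * z i * z j) := by
    intro x
    simp only [hB, hF, Finset.mul_sum, mul_assoc]
  have hAt : ∀ x, A (τ x) = A x := by
    intro x
    rw [hAexp, hAexp, Finset.sum_comm]
    refine Finset.sum_congr rfl fun i hi => Finset.sum_congr rfl fun j hj => ?_
    rw [← hft (τ x * _ * _), hτmul, hτmul, hτinv, hτinv, hw i hi, hz j hj, mul_assoc, mul_assoc,
      hz j hj, mul_assoc x]
    ring
  have hBt : ∀ x, B (τ x) = B x := by
    intro x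
    have e1 := hsum x
    have e2 := hsum (τ x)
    rw [hft, hAt] at e2
    linear_combination e2 - e1
  have hD : ∀ x y, B (x * y) - A (x * y) =
      (F x - F (τ x)) * f y + f x * (F y - F (τ y)) := by
    intro x y
    have e1 := h1 x y
    have e2 := h1 x (τ y)
    rw [hτinv] at e2
    linear_combination (h2 x y - h3 x y + e1 - e2) / 2
  have hD0 : ∀ x y, B (x * y) = A (x * y) := by
    intro x y
    have e1 := hD x y
    have e2 := hD (τ y) (τ x)
    rw [← hτmul, hAt, hBt, hτinv, hτinv, hft, hft] at e2
    linear_combination (e1 + e2) / 2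
  have hcomm : ∀ x y, F x * f y = f x * F y := by
    intro x y
    linear_combination (h1 x y - h2 x y + hD0 x (τ y)) / 2
  have hlam : ∀ x, F x = F a / f a * f x := by
    intro x
    field_simp
    linear_combination hcomm x a
  have hAB : ∀ x, A x = B x := by
    intro x
    have eB : B x = F a / f a * F x := by
      rw [hB, hF x, Finset.mul_sum]
      refine Finset.sum_congr rfl fun i hi => ?_
      rw [hlam (x * z i)]
      ring
    have eA : A x = F a / f a * F (τ x) := by
      rw [hA, hF (τ x), Finset.mul_sum]
      refine Finset.sum_congr rfl fun i hi => ?_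
      rw [hlam (x * τ (z i)), hG i hi]
      ring
    rw [eA, eB, hlam (τ x), hlam x, hft]
  intro x
  rw [← hAexp, ← hBexp]
  have e1 := hsum x
  have e2 := hAB x
  constructor
  · linear_combination (e1 + e2) / 2
  · linear_combination (e1 - e2) / 2
end

section
/- Let g : S → ℂ be a solution of d'Alembert's functional equation g(xy) + g(xτ(y)) = 2 g(x) g(y) for all x, y ∈ S. Then the following three properties are equivalent: (i) Σ_{i∈I} c_i g(x z_i) = Σ_{i∈I} c_i g(x τ(z_i)) for all x ∈ S; (ii) Σ_{i∈I} c_i g(x z_i) = g(x) · Σ_{i∈I} c_i g(z_i) for all x ∈ S; (iii) Σ_{i∈I} Σ_{j∈I} c_i c_j g(z_i z_j) = (Σ_{i∈I} c_i g(z_i))². -/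
theorem stmt_16 {S ι : Type*} [Semigroup S] (τ : S → S)
    (hτmul : ∀ x y : S, τ (x * y) = τ y * τ x)
    (hτinv : ∀ x : S, τ (τ x) = x)
    (I : Finset ι) (c : ι → ℂ) (z : ι → S)
    (hz : ∀ i ∈ I, ∀ s : S, z i * s = s * z i)
    (g : S → ℂ)
    (hg : ∀ x y : S, g (x * y) + g (x * τ y) = 2 * g x * g y) :
    ((∀ x : S, (∑ i ∈ I, c i * g (x * z i)) = ∑ i ∈ I, c i * g (x * τ (z i))) ↔
      (∀ x : S, (∑ i ∈ I, c i * g (x * z i)) = g x * ∑ i ∈ I, c i * g (z i))) ∧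
    ((∀ x : S, (∑ i ∈ I, c i * g (x * z i)) = g x * ∑ i ∈ I, c i * g (z i)) ↔
      (∑ i ∈ I, ∑ j ∈ I, c i * c j * g (z i * z j)) = (∑ i ∈ I, c i * g (z i)) ^ 2) := by
  have hτc : ∀ i ∈ I, ∀ s : S, τ (z i) * s = s * τ (z i) := by
    intro i hi s
    have h := congrArg τ (hz i hi (τ s))
    rw [hτmul, hτmul, hτinv] at h
    exact h.symm
  -- sine addition law for each central point
  have hA : ∀ i ∈ I, ∀ x y : S, g (x * y * z i) - g (x * y) * g (z i) =
      g x * (g (y * z i) - g y * g (z i)) + g y * (g (x * z i) - g x * g (z i)) := by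
    intro i hi x y
    have h1 := hg (x * y) (z i)
    have h2 := hg (x * τ (z i)) y
    have h3 := hg x (y * z i)
    have h4 := hg x (z i)
    have e1 : x * τ (z i) * y = x * y * τ (z i) := by
      rw [mul_assoc, hτc i hi y, mul_assoc]
    rw [e1] at h2
    rw [hτmul, ← mul_assoc, ← mul_assoc] at h3
    linear_combination h1 / 2 - h2 / 2 + h3 / 2 - g y * h4
  obtain ⟨F, hF⟩ : ∃ F : S → ℂ, ∀ x, F x = ∑ i ∈ I, c i * (g (x * z i) - g x * g (z i)) :=
    ⟨_, fun _ => rfl⟩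
  have hF2 : ∀ x, F x = (∑ i ∈ I, c i * g (x * z i)) - g x * ∑ i ∈ I, c i * g (z i) := by
    intro x
    rw [hF, Finset.mul_sum, ← Finset.sum_sub_distrib]
    exact Finset.sum_congr rfl fun i _ => by ring
  have hFadd : ∀ x y, F (x * y) = g x * F y + g y * F x := by
    intro x y
    rw [hF, hF, hF, Finset.mul_sum, Finset.mul_sum, ← Finset.sum_add_distrib]
    refine Finset.sum_congr rfl fun i hi => ?_
    rw [hA i hi]
    ring
  have hkey : ∀ x y, F x * (g (x * y) - g x * g y) = F y * (g (x * x) - g x ^ 2) := by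
    intro x y
    have h1 := hFadd x (x * y)
    have h2 := hFadd (x * x) y
    rw [← mul_assoc, h2, hFadd x y, hFadd x x] at h1
    linear_combination -h1
  have hsq : ∀ x, F x ^ 2 = (∑ i ∈ I, c i * F (z i)) * (g (x * x) - g x ^ 2) := by
    intro x
    rw [Finset.sum_mul, sq]
    nth_rewrite 2 [hF x]
    rw [Finset.mul_sum]
    refine Finset.sum_congr rfl fun i _ => ?_
    linear_combination c i * hkey x (z i)
  have hsum : ∑ i ∈ I, c i * F (z i) =
      (∑ i ∈ I, ∑ j ∈ I, c i * c j * g (z i * z j)) - (∑ i ∈ I, c i * g (z i)) ^ 2 := by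
    rw [sq, Finset.sum_mul, ← Finset.sum_sub_distrib]
    refine Finset.sum_congr rfl fun i _ => ?_
    rw [hF2, mul_sub, Finset.mul_sum, ← mul_assoc]
    simp only [mul_assoc]
  have hd : ∀ x, (∑ i ∈ I, c i * g (x * z i)) + ∑ i ∈ I, c i * g (x * τ (z i)) =
      2 * (g x * ∑ i ∈ I, c i * g (z i)) := by
    intro x
    rw [← Finset.sum_add_distrib, Finset.mul_sum, Finset.mul_sum]
    refine Finset.sum_congr rfl fun i _ => ?_
    linear_combination c i * hg x (z i)
  refine ⟨forall_congr' fun x => ⟨fun h => ?_, fun h => ?_⟩, fun h => ?_, fun h x => ?_⟩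
  · linear_combination hd x / 2 + h / 2
  · linear_combination 2 * h - hd x
  · have h0 : ∑ i ∈ I, c i * F (z i) = 0 :=
      Finset.sum_eq_zero fun i _ => by rw [hF2, h, sub_self, mul_zero]
    rw [hsum] at h0
    exact sub_eq_zero.mp h0
  · have h0 := hsq x
    rw [hsum, h, sub_self, zero_mul] at h0
    have h1 : F x = 0 := by simpa using h0
    rw [hF2] at h1
    exact sub_eq_zero.mp h1
end

section
/- Let f : S → ℂ be a non-zero solution of the integral Kannappan equation, and define g : S → ℂ by g(x) := (Σ_{i∈I} c_i f(x z_i)) / (Σ_{i∈I} c_i f(z_i)) (the denominator being non-zero). Then g is a solution of d'Alembert's functional equation g(xy) + g(xτ(y)) = 2 g(x) g(y) for all x, y ∈ S, Σ_{i∈I} c_i g(z_i) ≠ 0, Σ_{i∈I} c_i g(x z_i) = g(x) · Σ_{i∈I} c_i g(z_i) for all x ∈ S, and f(x) = (Σ_{i∈I} c_i g(z_i)) · g(x) for all x ∈ S. -/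
theorem stmt_17 {S ι : Type*} [Semigroup S] (τ : S → S)
    (hτmul : ∀ x y : S, τ (x * y) = τ y * τ x)
    (hτinv : ∀ x : S, τ (τ x) = x)
    (I : Finset ι) (c : ι → ℂ) (z : ι → S)
    (hz : ∀ i ∈ I, ∀ s : S, z i * s = s * z i)
    (f : S → ℂ) (hf : f ≠ 0)
(hK : ∀ x y : S,
      (∑ i ∈ I, c i * f (x * y * z i)) + (∑ i ∈ I, c i * f (x * τ y * z i))
        = 2 * f x * f y)
    (g : S → ℂ)
    (hg : ∀ x : S, g x = (∑ i ∈ I, c i * f (x * z i)) / (∑ i ∈ I, c i * f (z i))) :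
    (∀ x y : S, g (x * y) + g (x * τ y) = 2 * g x * g y) ∧
    (∑ i ∈ I, c i * g (z i)) ≠ 0 ∧
    (∀ x : S, (∑ i ∈ I, c i * g (x * z i)) = g x * ∑ i ∈ I, c i * g (z i)) ∧
    (∀ x : S, f x = (∑ i ∈ I, c i * g (z i)) * g x) := by
  have hcz : ∀ i ∈ I, ∀ s : S, τ (z i) * s = s * τ (z i) := by
    intro i hi s
    have h := congrArg τ (hz i hi (τ s))
    rw [hτmul, hτmul, hτinv] at h
    exact h.symm
  obtain ⟨y0, hy0⟩ : ∃ y, f y ≠ 0 := by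
    by_contra h
    push Not at h
    exact hf (funext h)
  have hev : ∀ x, f (τ x) = f x := by
    intro x
    have h1 := hK y0 x
    have h2 := hK y0 (τ x)
    rw [hτinv] at h2
    have : 2 * f y0 * f (τ x) = 2 * f y0 * f x := by rw [← h1, ← h2]; ring
    exact mul_left_cancel₀ (mul_ne_zero two_ne_zero hy0) this
  obtain ⟨M, hM⟩ : ∃ M, M = ∑ i ∈ I, c i * f (z i) := ⟨_, rfl⟩
  obtain ⟨F, hF⟩ : ∃ F : S → ℂ, ∀ x, F x = ∑ i ∈ I, c i * f (x * z i) := ⟨_, fun _ => rfl⟩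
  obtain ⟨F2, hF2⟩ : ∃ F2 : S → ℂ, ∀ x, F2 x = ∑ i ∈ I, c i * F (x * z i) :=
    ⟨_, fun _ => rfl⟩
  obtain ⟨H, hH⟩ : ∃ H : S → ℂ, ∀ x, H x = ∑ i ∈ I, c i * F (x * τ (z i)) :=
    ⟨_, fun _ => rfl⟩
  simp only [← hF] at hK hg
  rw [← hM] at hg
  have mv : ∀ i ∈ I, ∀ x y : S, x * z i * y = x * y * z i := by
    intro i hi x y
    rw [mul_assoc, hz i hi y, mul_assoc]
  have mvt : ∀ i ∈ I, ∀ x y : S, x * τ (z i) * y = x * y * τ (z i) := by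
    intro i hi x y
    rw [mul_assoc, hcz i hi y, mul_assoc]
  have hFt : ∀ x, F (τ x) = ∑ i ∈ I, c i * f (x * τ (z i)) := by
    intro x
    rw [hF]
    refine Finset.sum_congr rfl fun i hi => ?_
    rw [← hev, hτmul, hτinv, hcz i hi]
  have e1 : ∀ x, F2 x + H x = 2 * M * f x := by
    intro x
    rw [hF2, hH, ← Finset.sum_add_distrib, hM, Finset.mul_sum, Finset.sum_mul]
    refine Finset.sum_congr rfl fun i hi => ?_
    linear_combination c i * hK x (z i)
  have e2 : ∀ x y, F2 (x * y) + F2 (x * τ y) = 2 * F x * f y := by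
    intro x y
    rw [hF2, hF2, ← Finset.sum_add_distrib, hF, Finset.mul_sum, Finset.sum_mul]
    refine Finset.sum_congr rfl fun i hi => ?_
    have h := hK (x * z i) y
    rw [mv i hi, mv i hi] at h
    linear_combination c i * h
  have e3 : ∀ x y, F2 (x * y) + H (x * τ y) = 2 * f x * F y := by
    intro x y
    rw [hF2, hH, ← Finset.sum_add_distrib, hF, Finset.mul_sum]
    refine Finset.sum_congr rfl fun i hi => ?_
    have h := hK x (y * z i)
    rw [hτmul, hcz i hi, ← mul_assoc, ← mul_assoc] at h
    linear_combination c i * h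
  have e4 : ∀ x y, H (x * y) + H (x * τ y) = 2 * F (τ x) * f y := by
    intro x y
    rw [hH, hH, ← Finset.sum_add_distrib, hFt, Finset.mul_sum, Finset.sum_mul]
    refine Finset.sum_congr rfl fun i hi => ?_
    have h := hK (x * τ (z i)) y
    rw [mvt i hi, mvt i hi] at h
    linear_combination c i * h
  have hHev : ∀ x, H (τ x) = H x := by
    intro x
    simp only [hH, hF, Finset.mul_sum]
    rw [Finset.sum_comm]
    refine Finset.sum_congr rfl fun i hi => Finset.sum_congr rfl fun j hj => ?_
    rw [← hev (τ x * τ (z j) * z i), hτmul, hτmul, hτinv, hτinv, hcz i hi, hz j hj, mvt i hi x]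
    rw [← mvt i hi]
    ring
  have hF2ev : ∀ x, F2 (τ x) = F2 x := by
    intro x
    have h1 := e1 x
    have h2 := e1 (τ x)
    rw [hHev, hev] at h2
    linear_combination h2 - h1
  have e5 : ∀ x y, M * (f (x * y) + f (x * τ y)) = f x * (F y + F (τ y)) := by
    intro x y
    have h := e3 x (τ y)
    rw [hτinv] at h
    linear_combination (e3 x y + h - e1 (x * y) - e1 (x * τ y)) / 2
  have e6 : ∀ x y, M * (f (x * y) + f (x * τ y)) = f y * (F x + F (τ x)) := by
    intro x y
    linear_combination (e2 x y + e4 x y - e1 (x * y) - e1 (x * τ y)) / 2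
  have hM0 : M ≠ 0 := by
    intro h0
    rw [h0] at e1 e5
    have hodd : ∀ y, F (τ y) = - F y := by
      intro y
      have h := e5 y0 y
      rw [zero_mul] at h
      have := (mul_eq_zero.mp h.symm).resolve_left hy0
      linear_combination this
    have h7 : ∀ x y, F2 (x * y) = F x * f y + f x * F y := by
      intro x y
      linear_combination (e2 x y + e3 x y - e1 (x * τ y)) / 2
    have h8 : ∀ x y, F x * f y + f x * F y = 0 := by
      intro x y
      have h := hF2ev (x * y)
      rw [hτmul, h7, h7, hodd, hodd, hev, hev] at h
      linear_combination (-1 / 2) * h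
    have h9 : F y0 = 0 := by
      have h : f y0 * F y0 = 0 := by linear_combination (h8 y0 y0) / 2
      exact (mul_eq_zero.mp h).resolve_left hy0
    have h10 : ∀ x, F x = 0 := by
      intro x
      have h := h8 x y0
      rw [h9] at h
      have h : F x * f y0 = 0 := by linear_combination h
      exact (mul_eq_zero.mp h).resolve_right hy0
    have h := hK y0 y0
    rw [h10, h10] at h
    have h : f y0 * f y0 = 0 := by linear_combination (-1 / 2) * h
    exact hy0 (mul_self_eq_zero.mp h)
  obtain ⟨l, hl⟩ : ∃ l, ∀ x, F x + F (τ x) = 2 * l * f x := by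
    refine ⟨(F y0 + F (τ y0)) / (2 * f y0), fun x => ?_⟩
    field_simp
    linear_combination e5 x y0 - e6 x y0
  have e7 : ∀ x y, M * (f (x * y) + f (x * τ y)) = 2 * l * f x * f y := by
    intro x y
    rw [e5, hl]; ring
  have e8 : ∀ x y, M * (F (x * y) + F (x * τ y)) = 2 * l * F x * f y := by
    intro x y
    rw [hF, hF, hF x, ← Finset.sum_add_distrib, Finset.mul_sum, Finset.mul_sum, Finset.sum_mul]
    refine Finset.sum_congr rfl fun i hi => ?_
    have h := e7 (x * z i) y
    rw [mv i hi, mv i hi] at h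
    linear_combination c i * h
  have e9 : ∀ x, M * f x = l * F x := by
    intro x
    have h := e8 x y0
    rw [hK] at h
    apply mul_right_cancel₀ hy0
    linear_combination h / 2
  have hl0 : l ≠ 0 := by
    intro h
    have := e9 y0
    rw [h, zero_mul] at this
    exact (mul_ne_zero hM0 hy0) this
  have hFl : ∀ x, F x = l * f x := by
    intro x
    have h1 := e9 x
    have h2 := e9 (τ x)
    rw [hev] at h2
    have h3 : F (τ x) = F x := mul_left_cancel₀ hl0 (h2.symm.trans h1)
    linear_combination (hl x - h3) / 2
  have hMl : M = l * l := by
    apply mul_right_cancel₀ hy0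
    rw [e9, hFl]; ring
  have hgf : ∀ x, g x = f x / l := by
    intro x
    rw [hg, hFl, hMl]
    field_simp
  have hS : ∑ i ∈ I, c i * g (z i) = l := by
    have : ∑ i ∈ I, c i * g (z i) = M / l := by
      rw [hM, Finset.sum_div]
      exact Finset.sum_congr rfl fun i _ => by rw [hgf]; ring
    rw [this, hMl]
    field_simp
  rw [hS]
  refine ⟨fun x y => ?_, hl0, fun x => ?_, fun x => ?_⟩
  · rw [hgf, hgf, hgf, hgf]
    have h := e7 x y
    rw [hMl] at h
    have h : l * (f (x * y) + f (x * τ y)) = 2 * f x * f y := by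
      apply mul_left_cancel₀ hl0
      linear_combination h
    field_simp
    linear_combination h
  · have : ∑ i ∈ I, c i * g (x * z i) = F x / l := by
      rw [hF, Finset.sum_div]
      exact Finset.sum_congr rfl fun i _ => by rw [hgf]; ring
    rw [this, hgf, hFl]
    field_simp
  · rw [hgf]
    field_simp
end

section
/- Let g : S → ℂ be a solution of d'Alembert's functional equation g(xy) + g(xτ(y)) = 2 g(x) g(y) for all x, y ∈ S, with Σ_{i∈I} c_i g(z_i) ≠ 0 and Σ_{i∈I} c_i g(x z_i) = g(x) · Σ_{i∈I} c_i g(z_i) for all x ∈ S. Then the function f(x) := (Σ_{i∈I} c_i g(z_i)) · g(x) is a non-zero solution of the integral Kannappan equation. -/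
theorem stmt_18 {S ι : Type*} [Semigroup S] (τ : S → S)
    (hτmul : ∀ x y : S, τ (x * y) = τ y * τ x)
    (hτinv : ∀ x : S, τ (τ x) = x)
    (I : Finset ι) (c : ι → ℂ) (z : ι → S)
    (hz : ∀ i ∈ I, ∀ s : S, z i * s = s * z i)
    (g : S → ℂ)
    (hg : ∀ x y : S, g (x * y) + g (x * τ y) = 2 * g x * g y)
    (hg1 : (∑ i ∈ I, c i * g (z i)) ≠ 0)
    (hg2 : ∀ x : S, (∑ i ∈ I, c i * g (x * z i)) = g x * ∑ i ∈ I, c i * g (z i))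
    (f : S → ℂ)
    (hf : ∀ x : S, f x = (∑ i ∈ I, c i * g (z i)) * g x) :
    f ≠ 0 ∧ ∀ x y : S,
      (∑ i ∈ I, c i * f (x * y * z i)) + (∑ i ∈ I, c i * f (x * τ y * z i))
        = 2 * f x * f y := by 
  have key : ∀ x : S, (∑ i ∈ I, c i * f (x * z i))
      = (∑ i ∈ I, c i * g (z i)) * (g x * ∑ i ∈ I, c i * g (z i)) := by
    intro x
    rw [← hg2 x, Finset.mul_sum]
    refine Finset.sum_congr rfl fun i _ => ?_
    rw [hf]
    ring
  refine ⟨?_, ?_⟩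
  · intro h0
    apply hg1
    refine Finset.sum_eq_zero fun i _ => ?_
    have h := hf (z i)
    rw [h0, Pi.zero_apply] at h
    have h2 := (mul_eq_zero.mp h.symm).resolve_left hg1
    rw [h2, mul_zero]
  · intro x y
    rw [key, key, hf x, hf y]
    linear_combination (∑ i ∈ I, c i * g (z i)) ^ 2 * hg x y
end

section
/- Let χ : S → ℂ be a multiplicative function (i.e. χ(xy) = χ(x)χ(y) for all x, y ∈ S) with Σ_{i∈I} c_i χ(z_i) ≠ 0 and Σ_{i∈I} c_i χ(τ(z_i)) = Σ_{i∈I} c_i χ(z_i). Then the function f(x) := ((χ(x) + χ(τ(x)))/2) · Σ_{i∈I} c_i χ(z_i) is a non-zero solution of the integral Kannappan equation. -/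
theorem stmt_19 {S ι : Type*} [Semigroup S] (τ : S → S)
    (hτmul : ∀ x y : S, τ (x * y) = τ y * τ x)
    (hτinv : ∀ x : S, τ (τ x) = x)
    (I : Finset ι) (c : ι → ℂ) (z : ι → S)
    (hz : ∀ i ∈ I, ∀ s : S, z i * s = s * z i)
    (χ : S → ℂ) (hχ : ∀ x y : S, χ (x * y) = χ x * χ y)
    (hχ1 : (∑ i ∈ I, c i * χ (z i)) ≠ 0)
    (hχ2 : (∑ i ∈ I, c i * χ (τ (z i))) = ∑ i ∈ I, c i * χ (z i))
    (f : S → ℂ)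
    (hf : ∀ x : S, f x = ((χ x + χ (τ x)) / 2) * ∑ i ∈ I, c i * χ (z i)) :
    f ≠ 0 ∧ ∀ x y : S,
      (∑ i ∈ I, c i * f (x * y * z i)) + (∑ i ∈ I, c i * f (x * τ y * z i))
        = 2 * f x * f y := by 
  have key : ∀ w : S, (∑ i ∈ I, c i * f (w * z i))
      = ((χ w + χ (τ w)) / 2) * (∑ i ∈ I, c i * χ (z i)) * ∑ i ∈ I, c i * χ (z i) := by
    intro w
    have h1 : ∀ i ∈ I, c i * f (w * z i)
        = (χ w / 2 * (∑ i ∈ I, c i * χ (z i))) * (c i * χ (z i))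
          + (χ (τ w) / 2 * (∑ i ∈ I, c i * χ (z i))) * (c i * χ (τ (z i))) := by
      intro i _
      rw [hf, hτmul, hχ, hχ]
      ring
    rw [Finset.sum_congr rfl h1, Finset.sum_add_distrib, ← Finset.mul_sum, ← Finset.mul_sum, hχ2]
    ring
  constructor
  · intro h0
    have hneg : ∀ x, χ x + χ (τ x) = 0 := by
      intro x
      have h := hf x
      rw [h0] at h
      have h2 := (mul_eq_zero.mp h.symm).resolve_right hχ1
      simpa using h2
    apply hχ1
    apply Finset.sum_eq_zero
    intro i _
    have h1 := hneg (z i)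
    have h2 := hneg (z i * z i)
    rw [hτmul, hχ, hχ] at h2
    have h3 : χ (τ (z i)) = - χ (z i) := by linear_combination h1
    rw [h3] at h2
    have h4 : χ (z i) * χ (z i) = 0 := by linear_combination h2 / 2
    rw [mul_self_eq_zero.mp h4, mul_zero]
  · intro x y
    rw [key, key, hf x, hf y]
    simp only [hτmul, hτinv, hχ]
    ring
end
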